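/- arXiv:1704.02025 — 8 statements merged into one kernel-verified Lean document; each statement's English description precedes it below -/
import Mathlib

section
/- Let K ∈ L(H) be selfadjoint and nonnegative and such that AKA^{-1} is bounded, i.e. there exists C ∈ L(H) such that for every z ∈ D(A) one has Kz ∈ D(A) and A(Kz) = C(Az). Let T_1 ≥ 0 be such that I − e^{tA}Ke^{tA} is invertible in L(H) for every t > T_1, and set P̄(t) := (I − e^{tA}Ke^{tA})^{-1}. Then P̄ solves the Riccati equation (4.3) on (T_1,∞): for every t > T_1 and all x, y ∈ D(A), one has P̄(t)x ∈ D(A) and the function s ↦ ⟨P̄(s)x, y⟩ is differentiable at t with derivative −⟨Ax, P̄(t)y⟩ − ⟨P̄(t)x, Ay⟩ + 2⟨A P̄(t)x, P̄(t)y⟩. -/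
/-!
The heart of the matter is that a semigroup of selfadjoint operators is smoothing: `t ↦ e^{tA}` is
differentiable in operator norm at every `t > 0`. No spectral calculus is needed. For a selfadjoint
contraction `W` the sequence `‖W ^ k z‖ ^ 2` is decreasing and convex, which gives
`‖W ^ (2 n) (1 - W ^ 2)‖ ≤ 1 / (n + 1)` (`pow_gap_le`); hence `‖e^{(t+h)A} - e^{tA}‖ ≤ h / t`
(`semigroup_sub_le`), and, splitting `e^{tA} = e^{tA/2} e^{tA/2}`, the second differences are
`O(h k)` locally uniformly on `(0, ∞)` (`semigroup_second_difference_le`). A continuous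
Banach-valued function with such second differences is differentiable
(`exists_hasDerivAt_of_second_difference`).

Let `L` be the derivative at `t` and `G(s) = e^{sA} K e^{sA}`. Then `e^{tA}` maps `H` into `D(A)`,
with `A e^{tA} = L`, and `L = e^{tA} A` on `D(A)`. Since `P̄ x = x + e^{tA} K e^{tA} P̄ x`, `P̄(t)`
preserves `D(A)`; and `P̄ = (1 - G)⁻¹` is norm differentiable with derivative `P̄ G' P̄`, where
`G' = L K e^{tA} + e^{tA} K L`. With `u = P̄ x`, `v = P̄ y`, one has `L K e^{tA} u = A (u - x)` and
`⟪e^{tA} K L u, v⟫ = ⟪A u, G v⟫ = ⟪A u, v⟫ - ⟪u, A y⟫`, and these two add up to the right-hand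
side of the Riccati equation.
-/

open MeasureTheory
open scoped RealInnerProductSpace

/-! ### Selfadjoint contractions -/

section SelfadjointEstimates

variable {H : Type*} [NormedAddCommGroup H] [InnerProductSpace ℝ H] [CompleteSpace H]

lemma norm_le_of_abs_inner_le {L : H →L[ℝ] H} (hL : IsSelfAdjoint L) {c : ℝ} (hc : 0 ≤ c)
    (h : ∀ z, |⟪L z, z⟫| ≤ c * ‖z‖ ^ 2) : ‖L‖ ≤ c := by
  rw [L.norm_eq_iSup_rayleighQuotient hL.isSymmetric]
  refine Real.iSup_le (fun z => ?_) hc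
  have hz := h z
  rw [ContinuousLinearMap.rayleighQuotient, ContinuousLinearMap.reApplyInnerSelf_apply, abs_div,
    abs_of_nonneg (sq_nonneg ‖z‖)]
  exact div_le_of_le_mul₀ (by positivity) hc (by simpa using hz)

lemma inner_map_symm {L : H →L[ℝ] H} (hL : IsSelfAdjoint L) (u v : H) :
    ⟪L u, v⟫ = ⟪u, L v⟫ := hL.isSymmetric u v

/-- The discrete smoothing estimate for the positive contraction `W ^ 2`: in the quadratic form at
`z`, the operator gives `a n - a (n + 1)`, where `a k = ‖W ^ k z‖ ^ 2` is nonnegative, decreasing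
and convex. -/
lemma pow_gap_le {W : H →L[ℝ] H} (hW : IsSelfAdjoint W) (hW1 : ‖W‖ ≤ 1) (n : ℕ) :
    ‖(W ^ 2) ^ n * (1 - W ^ 2)‖ ≤ 1 / (n + 1 : ℝ) := by
  have hsa : IsSelfAdjoint ((W ^ 2) ^ n * (1 - W ^ 2)) := by
    have h1 : IsSelfAdjoint ((W ^ 2) ^ n) := (hW.pow 2).pow n
    have h2 : IsSelfAdjoint (1 - W ^ 2) := (IsSelfAdjoint.one _).sub (hW.pow 2)
    refine (h1.commute_iff h2).1 ?_
    exact ((Commute.one_right _).sub_right (Commute.refl _)).pow_left n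
  refine norm_le_of_abs_inner_le hsa (by positivity) fun z => ?_
  set u : ℕ → H := fun k => (W ^ k) z with hu
  have hus : ∀ k, u (k + 1) = W (u k) := fun k => by
    simp only [hu, pow_succ']
    rfl
  set a : ℕ → ℝ := fun k => ‖u k‖ ^ 2 with ha
  have hmono : ∀ k, a (k + 1) ≤ a k := fun k => by
    have : ‖u (k + 1)‖ ≤ ‖u k‖ := by
      rw [hus]; simpa using W.le_of_opNorm_le hW1 (u k)
    simp only [ha]; gcongr
  -- the second difference of `a` at `k` is `‖W ^ k (1 - W ^ 2) z‖ ^ 2`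
  have hconv : ∀ k, a (k + 1) - a (k + 2) ≤ a k - a (k + 1) := fun k => by
    have h0 : 0 ≤ ‖u k - u (k + 2)‖ ^ 2 := by positivity
    rw [norm_sub_sq_real, hus (k + 1), ← inner_map_symm hW, ← hus k,
      real_inner_self_eq_norm_sq, ← hus (k + 1)] at h0
    simp only [ha]; linarith
  have hpow : ∀ k v w, ⟪(W ^ k) v, w⟫ = ⟪v, (W ^ k) w⟫ := fun k v w =>
    inner_map_symm (hW.pow k) v w
  have hinner : ⟪((W ^ 2) ^ n * (1 - W ^ 2) : H →L[ℝ] H) z, z⟫ = a n - a (n + 1) := by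
    have e : (W ^ 2) ^ n * (1 - W ^ 2) = W ^ n * W ^ n - W ^ (n + 1) * W ^ (n + 1) := by
      rw [mul_sub, mul_one, ← pow_succ, ← pow_mul, ← pow_mul, ← pow_add, ← pow_add]
      congr 2 <;> ring
    rw [e]
    change ⟪(W ^ n) ((W ^ n) z) - (W ^ (n + 1)) ((W ^ (n + 1)) z), z⟫ = _
    rw [inner_sub_left, hpow n ((W ^ n) z), hpow (n + 1) ((W ^ (n + 1)) z),
      real_inner_self_eq_norm_sq, real_inner_self_eq_norm_sq]
  have hsum : ∀ m : ℕ, ((m : ℝ) + 1) * (a m - a (m + 1)) ≤ a 0 - a (m + 1) := by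
    intro m
    induction m with
    | zero => simp
    | succ m ih =>
      have := hconv m
      push_cast
      have hm : (0 : ℝ) ≤ (m : ℝ) + 1 := by positivity
      nlinarith
  have h0 : a 0 = ‖z‖ ^ 2 := by simp [ha, hu]
  have h1 : 0 ≤ a (n + 1) := by simp only [ha]; positivity
  rw [hinner, abs_of_nonneg (sub_nonneg.2 (hmono n)), ← h0, one_div, ← div_eq_inv_mul,
    le_div_iff₀ (by positivity)]
  linarith [hsum n]

end SelfadjointEstimates

/-! ### Differentiability from bounds on second differences -/

section SecondDifferences

variable {E : Type*} [NormedAddCommGroup E] [NormedSpace ℝ E] [CompleteSpace E]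

/-- Cross-multiplied form of: the slopes of `F` at `s` with steps `h` and `k` differ by at most
`c * (h + k)`. Integrating `F (s + h + v) - F (s + v)` over `v ∈ [0, k]` gives the same value as
integrating `F (s + k + v) - F (s + v)` over `v ∈ [0, h]`, and the integrands are nearly constant. -/
lemma slope_comparison {F : ℝ → E} (hF : Continuous F) {s c : ℝ} (hc : 0 ≤ c)
    (h2 : ∀ h k, 0 ≤ h → 0 ≤ k → ‖F (s + h + k) - F (s + h) - F (s + k) + F s‖ ≤ c * h * k)
    {h k : ℝ} (hh : 0 ≤ h) (hk : 0 ≤ k) :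
    ‖k • (F (s + h) - F s) - h • (F (s + k) - F s)‖ ≤ c * h * k * (h + k) := by
  have hint : ∀ a b, IntervalIntegrable F volume a b := fun a b => hF.intervalIntegrable a b
  have est : ∀ h k, 0 ≤ h → 0 ≤ k →
      ‖(∫ v in (0:ℝ)..k, (F (s + h + v) - F (s + v))) - k • (F (s + h) - F s)‖ ≤ c * h * k * k := by
    intro h k hh hk
    have : k • (F (s + h) - F s) = ∫ v in (0:ℝ)..k, (F (s + h) - F s) := by
      rw [intervalIntegral.integral_const, sub_zero]
    rw [this, ← intervalIntegral.integral_sub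
      (Continuous.intervalIntegrable (by fun_prop) _ _) (by simp)]
    refine (intervalIntegral.norm_integral_le_of_norm_le_const (C := c * h * k) ?_).trans ?_
    · intro v hv
      rw [Set.uIoc_of_le hk] at hv
      have := h2 h v hh hv.1.le
      calc _ = ‖F (s + h + v) - F (s + h) - F (s + v) + F s‖ := by congr 1; abel
        _ ≤ c * h * v := this
        _ ≤ c * h * k := by have := hv.2; gcongr
    · rw [sub_zero, abs_of_nonneg hk]
  have sym : (∫ v in (0:ℝ)..k, (F (s + h + v) - F (s + v))) =
      ∫ v in (0:ℝ)..h, (F (s + k + v) - F (s + v)) := by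
    rw [intervalIntegral.integral_sub (Continuous.intervalIntegrable (by fun_prop) _ _)
        (Continuous.intervalIntegrable (by fun_prop) _ _),
      intervalIntegral.integral_sub (Continuous.intervalIntegrable (by fun_prop) _ _)
        (Continuous.intervalIntegrable (by fun_prop) _ _)]
    simp only [intervalIntegral.integral_comp_add_left, add_zero]
    rw [intervalIntegral.integral_interval_sub_interval_comm' (hint _ _) (hint _ _) (hint _ _),
      show s + h + k = s + k + h by ring]
  have e1 := est h k hh hk
  have e2 := est k h hk hh
  rw [← sym] at e2
  rw [norm_sub_rev] at e1
  refine (norm_sub_le_norm_sub_add_norm_sub _ _ _).trans ((add_le_add e1 e2).trans (le_of_eq ?_))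
  ring

/-- Right differentiability with a quadratic remainder: the slopes of `F` at `s` are Cauchy. -/
lemma exists_right_deriv {F : ℝ → E} (hF : Continuous F) {s c : ℝ} (hc : 0 ≤ c)
    (h2 : ∀ h k, 0 ≤ h → 0 ≤ k → ‖F (s + h + k) - F (s + h) - F (s + k) + F s‖ ≤ c * h * k) :
    ∃ D : E, ∀ h, 0 ≤ h → ‖F (s + h) - F s - h • D‖ ≤ c * h ^ 2 := by
  set Q : ℝ → E := fun h => h⁻¹ • (F (s + h) - F s) with hQ
  have hQQ : ∀ h k, 0 < h → 0 < k → ‖Q h - Q k‖ ≤ c * (h + k) := by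
    intro h k hh hk
    have e : Q h - Q k = (h * k)⁻¹ • (k • (F (s + h) - F s) - h • (F (s + k) - F s)) := by
      simp only [hQ, smul_sub (h * k)⁻¹ (k • _), smul_smul]
      congr 2 <;> field_simp
    rw [e, norm_smul, Real.norm_of_nonneg (by positivity), inv_mul_le_iff₀ (by positivity)]
    refine (slope_comparison hF hc h2 hh.le hk.le).trans (le_of_eq ?_)
    ring
  have hlim : Filter.Tendsto (fun n : ℕ => 1 / ((n : ℝ) + 1)) Filter.atTop (nhds 0) :=
    tendsto_one_div_add_atTop_nhds_zero_nat
  have hpos : ∀ n : ℕ, 0 < 1 / ((n : ℝ) + 1) := fun n => by positivity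
  have hC : CauchySeq fun n : ℕ => Q (1 / ((n : ℝ) + 1)) := by
    refine cauchySeq_of_le_tendsto_0 (fun N : ℕ => c * (1 / ((N : ℝ) + 1) + 1 / ((N : ℝ) + 1)))
      (fun n m N hn hm => ?_) ?_
    · rw [dist_eq_norm]
      refine (hQQ _ _ (hpos n) (hpos m)).trans ?_
      gcongr
    · simpa using (hlim.add hlim).const_mul c
  obtain ⟨D, hD⟩ := cauchySeq_tendsto_of_complete hC
  refine ⟨D, fun h hh => ?_⟩
  rcases hh.eq_or_lt with rfl | hh
  · simp
  have hQD : ‖Q h - D‖ ≤ c * (h + 0) :=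
    le_of_tendsto_of_tendsto' (hD.const_sub (Q h)).norm ((hlim.const_add h).const_mul c)
      fun n => hQQ h _ hh (hpos n)
  have e : F (s + h) - F s - h • D = h • (Q h - D) := by
    simp only [hQ, smul_sub h (h⁻¹ • _), smul_smul, mul_inv_cancel₀ hh.ne', one_smul]
  rw [e, norm_smul, Real.norm_of_nonneg hh.le]
  calc h * ‖Q h - D‖ ≤ h * (c * (h + 0)) := by gcongr
    _ = c * h ^ 2 := by ring

lemma exists_hasDerivAt_of_second_difference {F : ℝ → E} (hF : Continuous F) {a c : ℝ}
    (hc : 0 ≤ c)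
    (h2 : ∀ s h k, a ≤ s → 0 ≤ h → 0 ≤ k →
      ‖F (s + h + k) - F (s + h) - F (s + k) + F s‖ ≤ c * h * k)
    {t : ℝ} (ht : a < t) : ∃ D : E, HasDerivAt F D t := by
  choose! D hD using fun s (hs : a ≤ s) => exists_right_deriv hF hc (fun h k => h2 s h k hs)
  refine ⟨D t, ?_⟩
  have key : ∀ h : ℝ, |h| < t - a → ‖F (t + h) - F t - h • D t‖ ≤ 7 * c * h ^ 2 := by
    intro h hlt
    rcases le_total 0 h with hh | hh
    · refine (hD t ht.le h hh).trans ?_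
      nlinarith [mul_nonneg hc (sq_nonneg h)]
    · obtain ⟨r, s, rfl, rfl, hr⟩ : ∃ r s, h = -r ∧ t = s + r ∧ 0 ≤ r :=
        ⟨-h, t + h, by ring, by ring, by linarith⟩
      rw [abs_neg, abs_of_nonneg hr] at hlt
      have hs : a ≤ s := by linarith
      have e1 := hD s hs r hr
      have e2 := hD s hs (r + r) (by linarith)
      have e3 := hD (s + r) ht.le r hr
      -- a left increment at `s + r` expressed by three right increments
      have e : F (s + r + -r) - F (s + r) - (-r) • D (s + r)
          = (F (s + (r + r)) - F s - (r + r) • D s) - (F (s + r + r) - F (s + r) - r • D (s + r))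
            - (2 : ℝ) • (F (s + r) - F s - r • D s) := by
        rw [show s + r + -r = s by ring, ← add_assoc s r r]
        module
      rw [e]
      refine (norm_sub_le _ _).trans ((add_le_add (norm_sub_le _ _) le_rfl).trans ?_)
      rw [norm_smul, Real.norm_of_nonneg zero_le_two]
      nlinarith [mul_nonneg hc (sq_nonneg r)]
  rw [hasDerivAt_iff_isLittleO_nhds_zero]
  have hO : (fun h : ℝ => F (t + h) - F t - h • D t) =O[nhds 0] fun h : ℝ => h ^ 2 := by
    refine Asymptotics.IsBigO.of_bound (7 * c) ?_
    have : ∀ᶠ h : ℝ in nhds 0, |h| < t - a := by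
      have := Metric.ball_mem_nhds (0 : ℝ) (sub_pos.2 ht)
      filter_upwards [this] with h hh
      simpa using hh
    filter_upwards [this] with h hh
    simpa using key h hh
  refine hO.trans_isLittleO ?_
  simpa using (Asymptotics.isLittleO_pow_id (𝕜 := ℝ) one_lt_two)

end SecondDifferences

/-! ### Smoothing of selfadjoint semigroups -/

section Semigroup

variable {H : Type*} [NormedAddCommGroup H] [InnerProductSpace ℝ H] [CompleteSpace H]
  {T : ℝ → H →L[ℝ] H}

lemma semigroup_nat_mul (hT0 : T 0 = 1)
    (hTsg : ∀ s t : ℝ, 0 ≤ s → 0 ≤ t → T (s + t) = (T s).comp (T t))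
    {t : ℝ} (ht : 0 ≤ t) (n : ℕ) : T (n * t) = T t ^ n := by
  induction n with
  | zero => simp [hT0]
  | succ n ih =>
    rw [show ((n + 1 : ℕ) : ℝ) * t = n * t + t by push_cast; ring,
      hTsg _ _ (by positivity) ht, ih, pow_succ]
    rfl

/-- A bounded semigroup of selfadjoint operators is contractive, because
`‖T t‖ ^ 2 ^ n = ‖T (2 ^ n * t)‖`. -/
lemma semigroup_norm_le_one (hT0 : T 0 = 1)
    (hTsg : ∀ s t : ℝ, 0 ≤ s → 0 ≤ t → T (s + t) = (T s).comp (T t))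
    (hTsa : ∀ t : ℝ, 0 ≤ t → IsSelfAdjoint (T t))
    {M : ℝ} (hTM : ∀ t : ℝ, 0 ≤ t → ‖T t‖ ≤ M) {t : ℝ} (ht : 0 ≤ t) : ‖T t‖ ≤ 1 := by
  by_contra! h
  obtain ⟨n, hn⟩ := pow_unbounded_of_one_lt M h
  have h1 : ‖T t‖ ^ 2 ^ n ≤ M := by
    rw [← (hTsa t ht).norm_pow_two_pow n, ← semigroup_nat_mul hT0 hTsg ht]
    exact hTM _ (by positivity)
  have h2 : ‖T t‖ ^ n ≤ ‖T t‖ ^ 2 ^ n := pow_le_pow_right₀ h.le Nat.lt_two_pow_self.le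
  linarith

/-- Norm Lipschitz bound away from `0`: with `n = ⌊t / h⌋`, the difference factors through
`(T h) ^ n * (1 - T h)`, to which `pow_gap_le` applies with `W = T (h / 2)`. -/
lemma semigroup_sub_le (hT0 : T 0 = 1)
    (hTsg : ∀ s t : ℝ, 0 ≤ s → 0 ≤ t → T (s + t) = (T s).comp (T t))
    (hTsa : ∀ t : ℝ, 0 ≤ t → IsSelfAdjoint (T t))
    (hT1 : ∀ t : ℝ, 0 ≤ t → ‖T t‖ ≤ 1) {t h : ℝ} (ht : 0 < t) (hh : 0 ≤ h) :
    ‖T (t + h) - T t‖ ≤ h / t := by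
  rcases hh.eq_or_lt with rfl | hh
  · simp
  set n := ⌊t / h⌋₊ with hn
  have hn1 : n * h ≤ t := (le_div_iff₀ hh).1 (Nat.floor_le (by positivity))
  have hn2 : t < (n + 1) * h := (div_lt_iff₀ hh).1 (Nat.lt_floor_add_one _)
  have hW : T (h / 2) ^ 2 = T h := by
    rw [← semigroup_nat_mul hT0 hTsg (by positivity)]
    congr 1
    push_cast
    ring
  have hTt : T t = T (t - n * h) * T h ^ n := by
    rw [← semigroup_nat_mul hT0 hTsg hh.le]
    exact (congrArg T (by ring)).trans (hTsg (t - n * h) (n * h) (by linarith) (by positivity))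
  have hTth : T (t + h) = T t * T h := hTsg t h ht.le hh.le
  have e : T t - T (t + h) = T (t - n * h) * (T h ^ n * (1 - T h)) := by
    rw [hTth, hTt]; noncomm_ring
  have hgap := pow_gap_le (hTsa (h / 2) (by positivity)) (hT1 _ (by positivity)) n
  rw [hW] at hgap
  rw [norm_sub_rev, e]
  calc _ ≤ ‖T (t - n * h)‖ * ‖T h ^ n * (1 - T h)‖ := norm_mul_le _ _
    _ ≤ 1 * (1 / (n + 1)) := by
      gcongr
      exact hT1 _ (by linarith)
    _ ≤ h / t := by
      rw [one_mul, div_le_div_iff₀ (by positivity) ht]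
      linarith

lemma semigroup_second_difference_le (hT0 : T 0 = 1)
    (hTsg : ∀ s t : ℝ, 0 ≤ s → 0 ≤ t → T (s + t) = (T s).comp (T t))
    (hTsa : ∀ t : ℝ, 0 ≤ t → IsSelfAdjoint (T t))
    (hT1 : ∀ t : ℝ, 0 ≤ t → ‖T t‖ ≤ 1) {a s h k : ℝ} (ha : 0 < a) (has : a ≤ s)
    (hh : 0 ≤ h) (hk : 0 ≤ k) :
    ‖T (s + h + k) - T (s + h) - T (s + k) + T s‖ ≤ 4 / a ^ 2 * h * k := by
  have hs : 0 < s / 2 := by linarith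
  have hmul : ∀ u v, 0 ≤ u → 0 ≤ v → T (s / 2 + u) * T (s / 2 + v) = T (s + u + v) := by
    intro u v hu hv
    refine (hTsg _ _ (by positivity) (by positivity)).symm.trans (congrArg T ?_)
    ring
  have e : T (s + h + k) - T (s + h) - T (s + k) + T s
      = (T (s / 2 + h) - T (s / 2)) * (T (s / 2 + k) - T (s / 2)) := by
    have h1 := hmul h k hh hk
    have h2 := hmul h 0 hh le_rfl
    have h3 := hmul 0 k le_rfl hk
    have h4 := hmul 0 0 le_rfl le_rfl
    simp only [add_zero] at h2 h3 h4
    rw [sub_mul, mul_sub, mul_sub, h1, h2, h3, h4]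
    abel
  have hb : ∀ u, 0 ≤ u → ‖T (s / 2 + u) - T (s / 2)‖ ≤ u / (a / 2) := fun u hu =>
    (semigroup_sub_le hT0 hTsg hTsa hT1 hs hu).trans (by gcongr)
  rw [e]
  calc _ ≤ _ := norm_mul_le _ _
    _ ≤ (h / (a / 2)) * (k / (a / 2)) := by
      gcongr
      exacts [hb h hh, hb k hk]
    _ = 4 / a ^ 2 * h * k := by field_simp; ring

/-- A semigroup of selfadjoint contractions is differentiable in operator norm at positive times;
no continuity at `0` is needed. -/
lemma semigroup_exists_hasDerivAt (hT0 : T 0 = 1)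
    (hTsg : ∀ s t : ℝ, 0 ≤ s → 0 ≤ t → T (s + t) = (T s).comp (T t))
    (hTsa : ∀ t : ℝ, 0 ≤ t → IsSelfAdjoint (T t))
    (hT1 : ∀ t : ℝ, 0 ≤ t → ‖T t‖ ≤ 1) {t : ℝ} (ht : 0 < t) :
    ∃ L : H →L[ℝ] H, HasDerivAt T L t := by
  set a := t / 2 with ha
  have ha0 : 0 < a := by positivity
  have hat : a < t := by linarith
  have hle : ∀ u v, a ≤ u → u ≤ v → ‖T v - T u‖ ≤ a⁻¹ * (v - u) := by
    intro u v hu huv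
    have := semigroup_sub_le hT0 hTsg hTsa hT1 (ha0.trans_le hu) (sub_nonneg.2 huv)
    rw [add_sub_cancel] at this
    refine this.trans ?_
    rw [div_eq_inv_mul]
    have := sub_nonneg.2 huv
    gcongr
  have hcont : ContinuousOn T (Set.Ici a) := by
    refine (LipschitzOnWith.of_dist_le_mul (K := ⟨a⁻¹, by positivity⟩) ?_).continuousOn
    intro u hu v hv
    rw [dist_eq_norm, Real.dist_eq]
    change _ ≤ a⁻¹ * _
    rcases le_total u v with huv | huv
    · rw [norm_sub_rev, abs_sub_comm, abs_of_nonneg (sub_nonneg.2 huv)]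
      exact hle u v hu huv
    · rw [abs_of_nonneg (sub_nonneg.2 huv)]
      exact hle v u hv huv
  -- norm continuity may fail at `0`, so `T` is frozen below `a = t / 2`
  have hF : Continuous fun s => T (max s a) :=
    hcont.comp_continuous (by fun_prop) fun s => le_max_right s a
  obtain ⟨L, hL⟩ := exists_hasDerivAt_of_second_difference hF (a := a) (c := 4 / a ^ 2)
    (by positivity) (fun s h k hs hh hk => by
      rw [max_eq_left (by linarith : a ≤ s + h + k), max_eq_left (by linarith : a ≤ s + h),
        max_eq_left (by linarith : a ≤ s + k), max_eq_left hs]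
      exact semigroup_second_difference_le hT0 hTsg hTsa hT1 ha0 hs hh hk) hat
  refine ⟨L, hL.congr_of_eventuallyEq ?_⟩
  filter_upwards [lt_mem_nhds hat] with s hs
  rw [max_eq_left hs.le]

end Semigroup

/-- Theorem 4.7: in the selfadjoint commuting case, if `K ∈ L(H)` is selfadjoint,
nonnegative, with `AKA⁻¹` bounded, and `I − e^{tA}Ke^{tA}` is invertible for `t > T₁`
with inverse `P̄(t)`, then `P̄` solves the Riccati equation (4.3) on `(T₁,∞)`. -/
theorem stmt_1
    {H : Type*}
    [NormedAddCommGroup H] [InnerProductSpace ℝ H] [CompleteSpace H]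
    -- the strongly continuous semigroup `e^{tA}` of selfadjoint operators
    (T : ℝ → H →L[ℝ] H)
    (hT0 : T 0 = 1)
    (hTsg : ∀ s t : ℝ, 0 ≤ s → 0 ≤ t → T (s + t) = (T s).comp (T t))
    (hTcont : ∀ x : H, Continuous fun t : ℝ => T t x)
    (hTsa : ∀ t : ℝ, 0 ≤ t → IsSelfAdjoint (T t))
    -- negative type
    (M ω : ℝ) (hM : 0 < M) (hω : 0 < ω)
    (hTnorm : ∀ t : ℝ, 0 ≤ t → ‖T t‖ ≤ M * Real.exp (-ω * t))
    -- the generator `A` of the semigroup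
    (domA : Set H) (A : H → H)
    (hdomA : ∀ x : H, x ∈ domA ↔
      ∃ y : H, HasDerivWithinAt (fun t : ℝ => T t x) y (Set.Ici 0) 0)
    (hA : ∀ x ∈ domA, HasDerivWithinAt (fun t : ℝ => T t x) (A x) (Set.Ici 0) 0)
    -- `K` selfadjoint, nonnegative, with `A K A⁻¹` bounded
    (K : H →L[ℝ] H)
    (hKsa : IsSelfAdjoint K)
    (hKpos : ∀ x : H, 0 ≤ ⟪K x, x⟫)
    (C : H →L[ℝ] H)
    (hC : ∀ z ∈ domA, K z ∈ domA ∧ A (K z) = C (A z))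
    -- `T₁ ≥ 0` such that `I − e^{tA}Ke^{tA}` is invertible for `t > T₁`,
    -- with inverse `P̄(t)`
    (T₁ : ℝ) (hT₁ : 0 ≤ T₁)
    (Pbar : ℝ → H →L[ℝ] H)
    (hPbar : ∀ t : ℝ, T₁ < t →
      ((1 : H →L[ℝ] H) - (T t).comp (K.comp (T t))).comp (Pbar t) = 1 ∧
      (Pbar t).comp ((1 : H →L[ℝ] H) - (T t).comp (K.comp (T t))) = 1) :
    -- `P̄` solves the Riccati equation (4.3) on `(T₁,∞)`
    ∀ t : ℝ, T₁ < t → ∀ x ∈ domA, ∀ y ∈ domA,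
      Pbar t x ∈ domA ∧
      HasDerivAt (fun s : ℝ => ⟪Pbar s x, y⟫)
        (-⟪A x, Pbar t y⟫ - ⟪Pbar t x, A y⟫ + 2 * ⟪A (Pbar t x), Pbar t y⟫) t := by
  intro t ht x hx y hy
  have ht0 : 0 < t := hT₁.trans_lt ht
  have hT1 : ∀ t : ℝ, 0 ≤ t → ‖T t‖ ≤ 1 := fun t ht =>
    semigroup_norm_le_one hT0 hTsg hTsa (M := M) (fun s hs => (hTnorm s hs).trans <|
      mul_le_of_le_one_right hM.le <| Real.exp_le_one_iff.2 <| by nlinarith) ht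
  obtain ⟨L, hL⟩ := semigroup_exists_hasDerivAt hT0 hTsg hTsa hT1 ht0
  have huniq : ∀ {f : ℝ → H} {a b : H}, HasDerivWithinAt f a (Set.Ici 0) 0 →
      HasDerivWithinAt f b (Set.Ici 0) 0 → a = b := fun ha hb =>
    (uniqueDiffWithinAt_Ici 0).eq_deriv _ ha hb
  have hA_eq : ∀ {z w : H}, HasDerivWithinAt (fun s : ℝ => T s z) w (Set.Ici 0) 0 →
      z ∈ domA ∧ A z = w := fun {z w} h =>
    have hz := (hdomA z).2 ⟨w, h⟩
    ⟨hz, huniq (hA z hz) h⟩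
  have hshift : HasDerivAt (fun s => T (t + s)) L 0 := by
    simpa using HasDerivAt.comp_const_add t (0 : ℝ) (by simpa using hL)
  have hLz : ∀ z, HasDerivWithinAt (fun s => T (t + s) z) (L z) (Set.Ici 0) 0 := fun z =>
    (hshift.clm_apply (hasDerivAt_const (0 : ℝ) z)).hasDerivWithinAt.congr_deriv (by simp)
  -- the semigroup is smoothing: `T t` maps `H` into the domain, with `A (T t z) = L z`
  have hAT : ∀ z, T t z ∈ domA ∧ A (T t z) = L z := fun z => by
    refine hA_eq ((hLz z).congr_of_mem (fun s hs => ?_) Set.self_mem_Ici)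
    rw [add_comm t s, hTsg s t hs ht0.le]
    rfl
  have hLA : ∀ z ∈ domA, L z = T t (A z) := fun z hz => by
    refine huniq (hLz z) (((T t).hasFDerivAt.comp_hasDerivWithinAt (0 : ℝ) (hA z hz)).congr_of_mem
      (fun s hs => ?_) Set.self_mem_Ici)
    rw [hTsg t s ht0.le hs]
    rfl
  have hA_add : ∀ z ∈ domA, ∀ w ∈ domA, z + w ∈ domA ∧ A (z + w) = A z + A w :=
    fun z hz w hw => hA_eq (by simpa [Pi.add_def] using (hA z hz).add (hA w hw))
  have hA_symm : ∀ z ∈ domA, ∀ w ∈ domA, ⟪A z, w⟫ = ⟪z, A w⟫ := fun z hz w hw => by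
    have h1 : HasDerivWithinAt (fun s => ⟪T s z, w⟫) ⟪A z, w⟫ (Set.Ici 0) 0 := by
      simpa using (hA z hz).inner ℝ (hasDerivWithinAt_const (0 : ℝ) (Set.Ici 0) w)
    have h2 : HasDerivWithinAt (fun s => ⟪z, T s w⟫) ⟪z, A w⟫ (Set.Ici 0) 0 := by
      simpa using (hasDerivWithinAt_const (0 : ℝ) (Set.Ici 0) z).inner ℝ (hA w hw)
    refine (uniqueDiffWithinAt_Ici 0).eq_deriv _ h1 (h2.congr_of_mem (fun s hs => ?_)
      Set.self_mem_Ici)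
    exact inner_map_symm (hTsa s hs) z w
  set G : ℝ → H →L[ℝ] H := fun s => T s * (K * T s) with hG
  have hGsa : IsSelfAdjoint (G t) := by
    rw [IsSelfAdjoint, hG, star_mul, star_mul, hKsa.star_eq, (hTsa t ht0.le).star_eq, mul_assoc]
  have hP1 : ∀ s, T₁ < s → (1 - G s) * Pbar s = 1 := fun s hs => (hPbar s hs).1
  have hP2 : ∀ s, T₁ < s → Pbar s * (1 - G s) = 1 := fun s hs => (hPbar s hs).2
  have hPx : ∀ z, Pbar t z = z + T t (K (T t (Pbar t z))) := fun z => by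
    have := congrArg (fun B : H →L[ℝ] H => B z) (hP1 t ht)
    exact sub_eq_iff_eq_add.1 this
  have hPdom : ∀ z ∈ domA, Pbar t z ∈ domA := fun z hz => by
    rw [hPx z]
    exact (hA_add z hz _ (hAT _).1).1
  refine ⟨hPdom x hx, ?_⟩
  have hGd : HasDerivAt G (L * (K * T t) + T t * (K * L)) t := hL.mul (hL.const_mul K)
  have hPd : HasDerivAt Pbar (Pbar t * (L * (K * T t) + T t * (K * L)) * Pbar t) t := by
    let U : (H →L[ℝ] H)ˣ := ⟨1 - G t, Pbar t, hP1 t ht, hP2 t ht⟩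
    have hinv : HasFDerivAt Ring.inverse _ (1 - G t) := hasFDerivAt_ringInverse (𝕜 := ℝ) U
    have h1 := hinv.comp_hasDerivAt t (hGd.const_sub 1)
    refine (h1.congr_of_eventuallyEq ?_).congr_deriv ?_
    · filter_upwards [lt_mem_nhds ht] with s hs
      exact (Ring.inverse_unit ⟨1 - G s, Pbar s, hP1 s hs, hP2 s hs⟩).symm
    · simp only [U, Units.inv_mk, neg_apply, ContinuousLinearMap.mulLeftRight_apply]
      noncomm_ring
  have hd : HasDerivAt (fun s => ⟪Pbar s x, y⟫)
      ⟪(Pbar t * (L * (K * T t) + T t * (K * L)) * Pbar t) x, y⟫ t := by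
    simpa using (hPd.clm_apply (hasDerivAt_const t x)).inner ℝ (hasDerivAt_const t y)
  refine hd.congr_deriv ?_
  set u := Pbar t x with hu
  set v := Pbar t y with hv
  have hudom : u ∈ domA := hPdom x hx
  have hPsymm : ∀ w, ⟪Pbar t w, y⟫ = ⟪w, v⟫ := fun w => by
    have h1 : (1 - G t) (Pbar t w) = w := congrArg (fun B : H →L[ℝ] H => B w) (hP1 t ht)
    have h2 : (1 - G t) v = y := congrArg (fun B : H →L[ℝ] H => B y) (hP1 t ht)
    conv_lhs => rw [← h2]
    rw [← inner_map_symm ((IsSelfAdjoint.one _).sub hGsa), h1]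
  have e1 : L (K (T t u)) = A u - A x := by
    have h1 := hA_add x hx _ (hAT (K (T t u))).1
    have h2 := h1.2
    rw [← hPx x, (hAT _).2] at h2
    exact eq_sub_of_add_eq' h2.symm
  have e2 : ⟪T t (K (L u)), v⟫ = ⟪A u, v⟫ - ⟪u, A y⟫ := by
    have h2 : v - G t v = y := congrArg (fun B : H →L[ℝ] H => B y) (hP1 t ht)
    have h3 : ⟪G t (A u), v⟫ = ⟪A u, G t v⟫ := inner_map_symm hGsa _ _
    rw [hLA u hudom, ← hA_symm u hudom y hy, ← h2, inner_sub_right, ← h3, sub_sub_cancel]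
    rfl
  have e3 : (Pbar t * (L * (K * T t) + T t * (K * L)) * Pbar t) x
      = Pbar t (L (K (T t u)) + T t (K (L u))) := rfl
  rw [e3, hPsymm, inner_add_left, e2, e1, inner_sub_left]
  ring
end

section
/- Let T^* ≥ 0 and let S : [T^*,∞) → L(H) be strongly continuous with each S(t) selfadjoint and nonnegative, solving the Riccati equation (4.3) on (T^*,∞): for each t > T^* the set D̄(t) := {z ∈ D(A) : S(t)z ∈ D(A)} is dense in H and, for all x, y ∈ D̄(t), the function s ↦ ⟨S(s)x, y⟩ is differentiable at t with derivative −⟨Ax, S(t)y⟩ − ⟨S(t)x, Ay⟩ + 2⟨A S(t)x, S(t)y⟩. Let P ∈ L(H) be an orthogonal projection commuting with A (i.e. P(D(A)) ⊆ D(A) and APz = PAz for all z ∈ D(A)) such that S(t)(P(D(A))) ⊆ D(A) for every t > T^*. Then the following are equivalent: (a) PS(·)P solves (4.3) on (T^*,∞), i.e. for every t > T^* and all x, y ∈ D(A), the function s ↦ ⟨PS(s)Px, y⟩ is differentiable at t with derivative −⟨Ax, PS(t)Py⟩ − ⟨PS(t)Px, Ay⟩ + 2⟨A PS(t)Px, PS(t)Py⟩;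 (b) S(t)(P(D(A))) ⊆ range(P) for every t > T^*. -/
/-!
For `x, y ∈ D(A)` the vectors `P x, P y` lie in the domain `D̄(t)`, so the Riccati equation for `S`
gives the derivative of `⟪P S P x, y⟫ = ⟪S P x, P y⟫`. Since `P` commutes with `A`, its linear terms
agree with those required of `P S P`, and uniqueness of derivatives reduces (a) to
`⟪A S P x, S P y⟫ = ⟪A P S P x, P S P y⟫`, that is, to
`⟪A (1 - P) S P x, (1 - P) S P y⟫ = 0`. This is clear under (b). Conversely, with `y = x` it says
`⟪A w, w⟫ = 0` for `w = (1 - P) S P x ∈ D(A)`.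

A selfadjoint semigroup of negative type satisfies `‖T t‖ ≤ exp (-ω t)` with constant one
(`semigroup_norm_le`), because `‖T t‖ ^ (2 ^ n) = ‖T (2 ^ n t)‖`. Differentiating
`⟪T t w, w⟫ ≤ exp (-ω t) ‖w‖²` at `t = 0` gives `⟪A w, w⟫ ≤ -ω ‖w‖²` (`generator_inner_le`),
so `w = 0`, which is (b).
-/


open MeasureTheory
open scoped RealInnerProductSpace

/-- A selfadjoint semigroup with `‖T t‖ ≤ M exp (-ω t)` satisfies the same bound with `M = 1`. -/
theorem semigroup_norm_le {H : Type*}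
    [NormedAddCommGroup H] [InnerProductSpace ℝ H] [CompleteSpace H]
    (T : ℝ → H →L[ℝ] H) (hT0 : T 0 = 1)
    (hTsg : ∀ s t : ℝ, 0 ≤ s → 0 ≤ t → T (s + t) = (T s).comp (T t))
    (hTsa : ∀ t : ℝ, 0 ≤ t → IsSelfAdjoint (T t))
    (M ω : ℝ)
    (hTnorm : ∀ t : ℝ, 0 ≤ t → ‖T t‖ ≤ M * Real.exp (-ω * t))
    (t : ℝ) (ht : 0 ≤ t) : ‖T t‖ ≤ Real.exp (-ω * t) := by
  have hpow : ∀ k : ℕ, T (k * t) = T t ^ k := by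
    intro k
    induction k with
    | zero => simpa using hT0
    | succ k ih =>
      rw [pow_succ, ← ih]
      push_cast
      rw [add_mul, one_mul, hTsg _ _ (by positivity) ht]
      rfl
  have hnorm : ∀ n : ℕ, ‖T t‖ ^ (2 ^ n) = ‖T (((2 ^ n : ℕ) : ℝ) * t)‖ := by
    intro n
    rw [hpow]
    exact congrArg NNReal.toReal ((hTsa t ht).nnnorm_pow_two_pow n).symm
  -- The powers `a ^ (2 ^ n)` are bounded by `M`, which forces `a ≤ 1`.
  set a : ℝ := ‖T t‖ * Real.exp (ω * t) with ha
  have hbound : ∀ n : ℕ, a ^ (2 ^ n) ≤ M := by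
    intro n
    have h1 := hTnorm (((2 ^ n : ℕ) : ℝ) * t) (by positivity)
    rw [← hnorm] at h1
    rw [ha, mul_pow, ← Real.exp_nat_mul]
    calc _ ≤ M * Real.exp (-ω * (((2 ^ n : ℕ) : ℝ) * t))
            * Real.exp (((2 ^ n : ℕ) : ℝ) * (ω * t)) := by gcongr
      _ = M := by
        rw [mul_assoc, ← Real.exp_add]
        ring_nf
        simp
  have ha1 : a ≤ 1 := by
    by_contra! h
    have hlim := (tendsto_pow_atTop_atTop_of_one_lt h).comp
      (tendsto_pow_atTop_atTop_of_one_lt (r := (2 : ℕ)) (by norm_num))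
    obtain ⟨n, hn⟩ := (hlim.eventually_gt_atTop M).exists
    exact absurd (hbound n) (not_le.mpr hn)
  calc ‖T t‖ = a * Real.exp (-ω * t) := by
        rw [ha, mul_assoc, ← Real.exp_add]
        simp
    _ ≤ Real.exp (-ω * t) := mul_le_of_le_one_left (Real.exp_pos _).le ha1

/-- The generator of a semigroup with `‖T t‖ ≤ exp (-ω t)` satisfies `⟪A w, w⟫ ≤ -ω ‖w‖²`; here
`v` plays the role of `A w`. -/
theorem generator_inner_le {H : Type*}
    [NormedAddCommGroup H] [InnerProductSpace ℝ H]
    (T : ℝ → H →L[ℝ] H) (hT0 : T 0 = 1) (ω : ℝ)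
    (hTnorm : ∀ t : ℝ, 0 ≤ t → ‖T t‖ ≤ Real.exp (-ω * t))
    (w v : H) (hv : HasDerivWithinAt (fun t : ℝ => T t w) v (Set.Ici 0) 0) :
    ⟪v, w⟫ ≤ -ω * ‖w‖ ^ 2 := by
  have h1 : HasDerivWithinAt (fun t : ℝ => ⟪T t w, w⟫) ⟪v, w⟫ (Set.Ici 0) 0 := by
    simpa using hv.inner ℝ (hasDerivWithinAt_const (0 : ℝ) (Set.Ici 0) w)
  have h2 : HasDerivWithinAt (fun t : ℝ => Real.exp (-ω * t) * ‖w‖ ^ 2)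
      (-ω * ‖w‖ ^ 2) (Set.Ici 0) 0 := by
    have := (((hasDerivAt_id (0 : ℝ)).const_mul (-ω)).exp.mul_const (‖w‖ ^ 2))
    simpa using this.hasDerivWithinAt
  have hs := hasDerivWithinAt_iff_tendsto_slope.mp (h1.sub h2)
  rw [Set.Ici_sdiff_left] at hs
  have : ⟪v, w⟫ - -ω * ‖w‖ ^ 2 ≤ 0 := by
    refine le_of_tendsto hs ?_
    filter_upwards [self_mem_nhdsWithin] with t ht
    have ht : 0 < t := ht
    have hle : ⟪T t w, w⟫ ≤ Real.exp (-ω * t) * ‖w‖ ^ 2 := by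
      calc ⟪T t w, w⟫ ≤ ‖T t w‖ * ‖w‖ := real_inner_le_norm _ _
        _ ≤ (Real.exp (-ω * t) * ‖w‖) * ‖w‖ := by
          gcongr
          exact (T t).le_of_opNorm_le (hTnorm t ht.le) w
        _ = _ := by ring
    rw [slope_def_field]
    apply div_nonpos_of_nonpos_of_nonneg _ (by linarith)
    simp [hT0]
    simpa using hle
  linarith

/-- Theorem 4.9: in the selfadjoint commuting case, given a solution `S` of the Riccati
equation (4.3) on `(T^*,∞)` and an orthogonal projection `P` commuting with `A` such
that `S(t)(P(D(A))) ⊆ D(A)`, the family `P S(·) P` solves (4.3) on `(T^*,∞)` if and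
only if `S(t)(P(D(A))) ⊆ R(P)` for every `t > T^*`. -/
theorem stmt_3
    {H : Type*}
    [NormedAddCommGroup H] [InnerProductSpace ℝ H] [CompleteSpace H]
    -- the strongly continuous semigroup `e^{tA}` of selfadjoint operators
    (T : ℝ → H →L[ℝ] H)
    (hT0 : T 0 = 1)
    (hTsg : ∀ s t : ℝ, 0 ≤ s → 0 ≤ t → T (s + t) = (T s).comp (T t))
    (hTcont : ∀ x : H, Continuous fun t : ℝ => T t x)
    (hTsa : ∀ t : ℝ, 0 ≤ t → IsSelfAdjoint (T t))
    -- negative type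
    (M ω : ℝ) (hM : 0 < M) (hω : 0 < ω)
    (hTnorm : ∀ t : ℝ, 0 ≤ t → ‖T t‖ ≤ M * Real.exp (-ω * t))
    -- the generator `A` of the semigroup
    (domA : Set H) (A : H → H)
    (hdomA : ∀ x : H, x ∈ domA ↔
      ∃ y : H, HasDerivWithinAt (fun t : ℝ => T t x) y (Set.Ici 0) 0)
    (hA : ∀ x ∈ domA, HasDerivWithinAt (fun t : ℝ => T t x) (A x) (Set.Ici 0) 0)
    -- the family `S(t)`, `t ≥ T^*`: selfadjoint, nonnegative, strongly continuous
    (Tstar : ℝ) (hTstar : 0 ≤ Tstar)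
    (S : ℝ → H →L[ℝ] H)
    (hSsa : ∀ t : ℝ, Tstar ≤ t → IsSelfAdjoint (S t))
    (hSpos : ∀ t : ℝ, Tstar ≤ t → ∀ x : H, 0 ≤ ⟪S t x, x⟫)
    (hScont : ∀ x : H, ContinuousOn (fun t : ℝ => S t x) (Set.Ici Tstar))
    -- `S` solves the Riccati equation (4.3) on `(T^*,∞)`
    (hSdense : ∀ t : ℝ, Tstar < t → Dense {z : H | z ∈ domA ∧ S t z ∈ domA})
    (hSricc : ∀ t : ℝ, Tstar < t →
      ∀ x ∈ {z : H | z ∈ domA ∧ S t z ∈ domA},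
      ∀ y ∈ {z : H | z ∈ domA ∧ S t z ∈ domA},
      HasDerivAt (fun s : ℝ => ⟪S s x, y⟫)
        (-⟪A x, S t y⟫ - ⟪S t x, A y⟫ + 2 * ⟪A (S t x), S t y⟫) t)
    -- `P` is an orthogonal projection commuting with `A`,
    -- with `S(t)(P(D(A))) ⊆ D(A)` for all `t > T^*`
    (P : H →L[ℝ] H)
    (hPidem : P.comp P = P)
    (hPsa : IsSelfAdjoint P)
    (hPA : ∀ z ∈ domA, P z ∈ domA ∧ A (P z) = P (A z))
    (hSP : ∀ t : ℝ, Tstar < t → ∀ z ∈ domA, S t (P z) ∈ domA) :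
    -- (a) `P S(·) P` solves (4.3) on `(T^*,∞)`  ↔  (b) `S(t)(P(D(A))) ⊆ R(P)`
    ((∀ t : ℝ, Tstar < t → ∀ x ∈ domA, ∀ y ∈ domA,
        P (S t (P x)) ∈ domA ∧
        HasDerivAt (fun s : ℝ => ⟪P (S s (P x)), y⟫)
          (-⟪A x, P (S t (P y))⟫ - ⟪P (S t (P x)), A y⟫ +
            2 * ⟪A (P (S t (P x))), P (S t (P y))⟫) t)
      ↔ (∀ t : ℝ, Tstar < t → ∀ z ∈ domA, S t (P z) ∈ Set.range P)) := by
  have hPP : ∀ u : H, P (P u) = P u := fun u => DFunLike.congr_fun hPidem u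
  have hPsym : ∀ u v : H, ⟪P u, v⟫ = ⟪u, P v⟫ := fun u v => by
    simpa using (ContinuousLinearMap.isSelfAdjoint_iff_isSymmetric.mp hPsa) u v
  have hAsub : ∀ u ∈ domA, ∀ v ∈ domA, u - v ∈ domA ∧ A (u - v) = A u - A v := by
    intro u hu v hv
    have hd : HasDerivWithinAt (fun t : ℝ => T t (u - v)) (A u - A v) (Set.Ici 0) 0 := by
      simp only [map_sub]
      exact (hA u hu).sub (hA v hv)
    have hmem : u - v ∈ domA := (hdomA _).mpr ⟨_, hd⟩
    exact ⟨hmem, (uniqueDiffOn_Ici (0 : ℝ) 0 Set.self_mem_Ici).eq_deriv _ (hA _ hmem) hd⟩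
  -- The equation for `S` tested on `P x, P y`, with `P` moved across the inner products.
  have hderiv : ∀ t : ℝ, Tstar < t → ∀ x ∈ domA, ∀ y ∈ domA,
      HasDerivAt (fun s : ℝ => ⟪P (S s (P x)), y⟫)
        (-⟪A x, P (S t (P y))⟫ - ⟪P (S t (P x)), A y⟫ +
          2 * ⟪A (S t (P x)), S t (P y)⟫) t := by
    intro t ht x hx y hy
    have h := hSricc t ht (P x) ⟨(hPA x hx).1, hSP t ht x hx⟩ (P y) ⟨(hPA y hy).1, hSP t ht y hy⟩
    rw [(hPA x hx).2, (hPA y hy).2] at h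
    simpa only [hPsym] using h
  constructor
  · intro ha t ht x hx
    have hu := hSP t ht x hx
    set u := S t (P x) with hu_def
    have heq : ⟪A u, u⟫ = ⟪A (P u), P u⟫ := by
      have := (hderiv t ht x hx x hx).unique (ha t ht x hx x hx).2
      simp only [← hu_def] at this
      linarith
    obtain ⟨hPu, hAPu⟩ := hPA u hu
    obtain ⟨hw, hAw⟩ := hAsub u hu (P u) hPu
    have hzero : ⟪A (u - P u), u - P u⟫ = 0 := by
      rw [hAw, hAPu, inner_sub_left, inner_sub_right, inner_sub_right, hPsym, hPsym, hPP]
      rw [hAPu, hPsym, hPP] at heq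
      linarith
    have hle := generator_inner_le T hT0 ω
      (semigroup_norm_le T hT0 hTsg hTsa M ω hTnorm) (u - P u) _ (hA _ hw)
    rw [hzero] at hle
    have hnorm : ‖u - P u‖ = 0 := by
      by_contra hne
      have : 0 < ω * ‖u - P u‖ ^ 2 := by positivity
      linarith
    exact ⟨u, (sub_eq_zero.mp (norm_eq_zero.mp hnorm)).symm⟩
  · intro hb t ht x hx y hy
    have hfix : ∀ z ∈ domA, P (S t (P z)) = S t (P z) := by
      intro z hz
      obtain ⟨v, hv⟩ := hb t ht z hz
      rw [← hv, hPP]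
    refine ⟨(hPA _ (hSP t ht x hx)).1, ?_⟩
    have h := hderiv t ht x hx y hy
    rwa [← hfix x hx, ← hfix y hy, hPP, hPP] at h
end

section
/- (Uniqueness for the differential Lyapunov equation.) Assume D(A^*) is dense in X. Let Q : [0,∞) → L(X) be such that each Q(t) is selfadjoint and nonnegative, Q(0) = 0, and for all x, y ∈ D(A^*) the function t ↦ ⟨Q(t)x, y⟩_X is continuous on [0,∞), differentiable on (0,∞), and satisfies d/dt⟨Q(t)x, y⟩_X = ⟨Q(t)x, A^*y⟩_X + ⟨A^*x, Q(t)y⟩_X + ⟨B^*x, B^*y⟩_U for all t > 0. Then Q(t) = Q_t (the controllability operator) for every t ≥ 0. -/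
open MeasureTheory
open scoped RealInnerProductSpace

/-!
Write `S r = (e^{rA})^*`. Formally, for `x, y ∈ D(A^*)` the function
`s ↦ ⟪Qf(s) S(t-s) x, S(t-s) y⟫` has derivative `⟪B^* S(t-s) x, B^* S(t-s) y⟫`: the generator
terms of the Lyapunov equation cancel against those produced by `S(t-s)`. Integrating over `[0,t]`
gives `⟪Qf(t) x, y⟫ = ⟪Q_t x, y⟫`.

The product rule needs `s ↦ ‖Qf(s)‖` to be locally bounded. Weak continuity of `Qf` is known only
on the dense set `D(A^*)`, where the uniform boundedness principle is not available. The remedy is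
to smooth: let `R_a x = ∫_0^a S(r) x dr`, a bounded operator with range in `D(A^*)` that commutes
with `S` and hence with `A^*`. Then `P(s) = R_a^* Qf(s) R_a` is weakly continuous on all of `X`, so
locally bounded by Banach–Steinhaus (`exists_bound_of_weak_continuousOn`), and it solves the same
equation with `B^*` replaced by `B^* R_a`. The formal argument applies to `P`
(`lyapunov_integral`) and gives `⟪Qf(t) R_a x, R_a y⟫ = ⟪Q_t R_a x, R_a y⟫` on `D(A^*)`. Finally
`a⁻¹ R_a x → x` as `a → 0+`, and `D(A^*)` is dense.
-/

open Filter Topology Set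

/-! ### Weak convergence and the product rule -/

section Weak

variable {X : Type*} [NormedAddCommGroup X] [InnerProductSpace ℝ X]

/-- The inner product of a bounded weakly convergent family with a strongly convergent one
converges. -/
lemma tendsto_inner_weak_strong {ι : Type*} {l : Filter ι} {z a : ι → X} {z0 a0 : X} {C : ℝ}
    (hz : ∀ y, Tendsto (fun i => ⟪z i, y⟫) l (𝓝 ⟪z0, y⟫))
    (hC : ∀ᶠ i in l, ‖z i‖ ≤ C) (ha : Tendsto a l (𝓝 a0)) :
    Tendsto (fun i => ⟪z i, a i⟫) l (𝓝 ⟪z0, a0⟫) := by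
  have h1 : Tendsto (fun i => ⟪z i, a i - a0⟫) l (𝓝 0) := by
    have h2 : Tendsto (fun i => C * ‖a i - a0‖) l (𝓝 0) := by
      have := ((tendsto_iff_norm_sub_tendsto_zero.1 ha).const_mul C)
      simpa using this
    refine squeeze_zero_norm' ?_ h2
    filter_upwards [hC] with i hi
    exact (norm_inner_le_norm _ _).trans (by gcongr)
  have h3 := h1.add (hz a0)
  simp only [zero_add] at h3
  refine h3.congr fun i => ?_
  rw [← inner_add_right, sub_add_cancel]

/-- Derivative of `⟪z s, w s⟫` at a zero of `w`: bounded weak continuity of `z` suffices. -/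
lemma hasDerivAt_inner_weak {z w : ℝ → X} {z0 w' : X} {C s0 : ℝ}
    (hz : ∀ y, Tendsto (fun i => ⟪z i, y⟫) (𝓝 s0) (𝓝 ⟪z0, y⟫))
    (hC : ∀ᶠ i in 𝓝 s0, ‖z i‖ ≤ C) (hw : HasDerivAt w w' s0) (hw0 : w s0 = 0) :
    HasDerivAt (fun s => ⟪z s, w s⟫) ⟪z0, w'⟫ s0 := by
  rw [hasDerivAt_iff_tendsto_slope] at hw ⊢
  have := tendsto_inner_weak_strong (fun y => (hz y).mono_left nhdsWithin_le_nhds)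
    (hC.filter_mono nhdsWithin_le_nhds) hw
  refine this.congr fun s => ?_
  simp [slope, hw0, inner_smul_right]

/-- An eventually bounded, weakly convergent family of symmetric operators maps strongly convergent
vectors to weakly convergent ones. -/
lemma tendsto_weak_apply {ι : Type*} {l : Filter ι} {P : ι → X →L[ℝ] X} {P0 : X →L[ℝ] X}
    {v : ι → X} {v0 : X} {C : ℝ} (hP0 : ∀ x y, ⟪P0 x, y⟫ = ⟪P0 y, x⟫)
    (hsym : ∀ᶠ i in l, ∀ x y, ⟪P i x, y⟫ = ⟪P i y, x⟫)
    (hP : ∀ x y, Tendsto (fun i => ⟪P i x, y⟫) l (𝓝 ⟪P0 x, y⟫))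
    (hC : ∀ᶠ i in l, ‖P i‖ ≤ C) (hv : Tendsto v l (𝓝 v0)) (y : X) :
    Tendsto (fun i => ⟪P i (v i), y⟫) l (𝓝 ⟪P0 v0, y⟫) := by
  rw [hP0]
  have hb : ∀ᶠ i in l, ‖P i y‖ ≤ C * ‖y‖ := by
    filter_upwards [hC] with i hi
    exact (P i).le_of_opNorm_le hi y
  refine (tendsto_inner_weak_strong (hP y) hb hv).congr' ?_
  filter_upwards [hsym] with i hi
  rw [hi]

/-- Product rule for `⟪P s (u s), v s⟫` with `P` symmetric, locally bounded, weakly continuous, and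
differentiable only in the single matrix entry `⟪P s (u s0), v s0⟫`. -/
lemma hasDerivAt_inner_apply {P : ℝ → X →L[ℝ] X} {u v : ℝ → X} {u' v' : X} {C s0 d : ℝ}
    (hsym : ∀ᶠ i in 𝓝 s0, ∀ x y, ⟪P i x, y⟫ = ⟪P i y, x⟫)
    (hP : ∀ x y, Tendsto (fun i => ⟪P i x, y⟫) (𝓝 s0) (𝓝 ⟪P s0 x, y⟫))
    (hC : ∀ᶠ i in 𝓝 s0, ‖P i‖ ≤ C)
    (hu : HasDerivAt u u' s0) (hv : HasDerivAt v v' s0)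
    (hd : HasDerivAt (fun s => ⟪P s (u s0), v s0⟫) d s0) :
    HasDerivAt (fun s => ⟪P s (u s), v s⟫) (⟪P s0 (v s0), u'⟫ + ⟪P s0 (u s0), v'⟫ + d) s0 := by
  have hs0 : ∀ x y, ⟪P s0 x, y⟫ = ⟪P s0 y, x⟫ := hsym.self_of_nhds
  have hvb : ∀ᶠ s in 𝓝 s0, ‖v s‖ ≤ ‖v s0‖ + 1 :=
    (hv.continuousAt.norm.eventually_lt_const (lt_add_one _)).mono fun _ h => h.le
  have h1 : HasDerivAt (fun s => ⟪P s (v s), u s - u s0⟫) ⟪P s0 (v s0), u'⟫ s0 := by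
    refine hasDerivAt_inner_weak (C := C * (‖v s0‖ + 1))
      (tendsto_weak_apply hs0 hsym hP hC hv.continuousAt) ?_ (hu.sub_const _) (sub_self _)
    filter_upwards [hC, hvb] with s hs hs'
    exact (P s).le_of_opNorm_le_of_le hs hs'
  have h2 : HasDerivAt (fun s => ⟪P s (u s0), v s - v s0⟫) ⟪P s0 (u s0), v'⟫ s0 := by
    refine hasDerivAt_inner_weak (C := C * ‖u s0‖) (hP _) ?_ (hv.sub_const _) (sub_self _)
    filter_upwards [hC] with s hs
    exact (P s).le_of_opNorm_le hs _
  refine ((h1.add h2).add hd).congr_of_eventuallyEq ?_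
  filter_upwards [hsym] with s hs
  simp only [Pi.add_apply]
  rw [hs (v s), map_sub, inner_sub_left, inner_sub_right]
  ring

/-- Uniform boundedness on compact time intervals. -/
lemma exists_bound_of_weak_continuousOn [CompleteSpace X] {P : ℝ → X →L[ℝ] X}
    (hPc : ∀ x y, ContinuousOn (fun s => ⟪P s x, y⟫) (Ici 0)) (b : ℝ) :
    ∃ C, ∀ s ∈ Icc 0 b, ‖P s‖ ≤ C := by
  have h1 : ∀ x : X, ∃ C, ∀ s : Icc (0 : ℝ) b, ‖P s x‖ ≤ C := by
    intro x
    obtain ⟨C, hC⟩ := banach_steinhaus (g := fun s : Icc (0 : ℝ) b => innerSL ℝ (P s x)) (by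
      intro y
      obtain ⟨C, hC⟩ := (isCompact_Icc (a := (0 : ℝ)) (b := b)).exists_bound_of_continuousOn
        ((hPc x y).mono Icc_subset_Ici_self)
      exact ⟨C, fun s => by simpa using hC s s.2⟩)
    exact ⟨C, fun s => by simpa using hC s⟩
  obtain ⟨C, hC⟩ := banach_steinhaus h1
  exact ⟨C, fun s hs => hC ⟨s, hs⟩⟩

end Weak

/-! ### The adjoint semigroup and its smoothing operators -/

section Semigroup

variable {X : Type*} [NormedAddCommGroup X] [NormedSpace ℝ X]

/-- Trajectories through vectors of the domain stay in the domain. -/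
lemma gen_apply {S : ℝ → X →L[ℝ] X}
    (hadd : ∀ s t : ℝ, 0 ≤ s → 0 ≤ t → S (s + t) = (S s).comp (S t))
    {x x' : X} (hx : HasDerivWithinAt (fun t => S t x) x' (Ici 0) 0) {r : ℝ} (hr : 0 ≤ r) :
    HasDerivWithinAt (fun t => S t (S r x)) (S r x') (Ici 0) 0 := by
  refine ((S r).hasFDerivAt.comp_hasDerivWithinAt 0 hx).congr_of_mem (fun t ht => ?_) self_mem_Ici
  have h1 := hadd t r ht hr
  rw [add_comm, hadd r t hr ht] at h1
  exact (DFunLike.congr_fun h1 x).symm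

/-- `S(b) x = x + ∫_0^b S(r) A^* x dr`: both sides are continuous with the same right derivative. -/
lemma integral_gen [CompleteSpace X] {S : ℝ → X →L[ℝ] X} (h0 : S 0 = 1)
    (hadd : ∀ s t : ℝ, 0 ≤ s → 0 ≤ t → S (s + t) = (S s).comp (S t))
    (hc : ∀ x, Continuous fun t => S t x)
    {x x' : X} (hx : HasDerivWithinAt (fun t => S t x) x' (Ici 0) 0) {b : ℝ} (hb : 0 ≤ b) :
    S b x = x + ∫ r in (0 : ℝ)..b, S r x' := by
  have hF : ∀ t, HasDerivAt (fun t => x + ∫ r in (0 : ℝ)..t, S r x') (S t x') t := fun t =>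
    ((hc x').integral_hasStrictDerivAt 0 t).hasDerivAt.const_add x
  refine eq_of_has_deriv_right_eq (a := 0) (b := b) (f' := fun t => S t x')
    (f := fun t => S t x) (g := fun t => x + ∫ r in (0 : ℝ)..t, S r x') ?_ ?_ ?_ ?_ ?_ b ⟨hb, le_rfl⟩
  · intro t ht
    have h1 := gen_apply hadd hx ht.1
    have h2 : HasDerivWithinAt (fun s => S (s - t) (S t x)) (S t x') (Ici t) t := by
      have h3 : HasDerivWithinAt (fun s : ℝ => s - t) 1 (Ici t) t :=
        (hasDerivAt_id t).sub_const t |>.hasDerivWithinAt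
      have h4 := HasDerivWithinAt.scomp_of_eq t (t' := Ici 0) (y := 0) h1 h3
        (fun s hs => by simpa using hs) (by simp)
      simpa [Function.comp_def] using h4
    refine h2.congr_of_mem (fun s hs => ?_) self_mem_Ici
    have := hadd (s - t) t (by simpa using hs) ht.1
    rw [sub_add_cancel] at this
    rw [this]; rfl
  · exact fun t _ => (hF t).hasDerivWithinAt
  · exact (hc x).continuousOn
  · exact fun t _ => (hF t).continuousAt.continuousWithinAt
  · simp [h0]

/-- Trajectories through vectors of the domain are two-sidedly differentiable at positive times. -/
lemma hasDerivAt_gen [CompleteSpace X] {S : ℝ → X →L[ℝ] X} (h0 : S 0 = 1)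
    (hadd : ∀ s t : ℝ, 0 ≤ s → 0 ≤ t → S (s + t) = (S s).comp (S t))
    (hc : ∀ x, Continuous fun t => S t x)
    {x x' : X} (hx : HasDerivWithinAt (fun t => S t x) x' (Ici 0) 0) {t : ℝ} (ht : 0 < t) :
    HasDerivAt (fun t => S t x) (S t x') t := by
  refine (((hc x').integral_hasStrictDerivAt 0 t).hasDerivAt.const_add x).congr_of_eventuallyEq ?_
  filter_upwards [lt_mem_nhds ht] with s hs
  exact integral_gen h0 hadd hc hx hs.le

/-- The smoothing operator `R_a x = ∫_0^a S(r) x dr`, as a bounded operator.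
The bound `M` on `S` enters only through the proof of boundedness. -/
noncomputable def smoothing (S : ℝ → X →L[ℝ] X) (hc : ∀ x, Continuous fun t => S t x) (M : ℝ)
    (hM : ∀ t, ‖S t‖ ≤ M) (a : ℝ) : X →L[ℝ] X :=
  LinearMap.mkContinuous
    { toFun := fun x => ∫ r in (0 : ℝ)..a, S r x
      map_add' := fun x y => by
        simp only [map_add]
        exact intervalIntegral.integral_add ((hc x).intervalIntegrable _ _)
          ((hc y).intervalIntegrable _ _)
      map_smul' := fun c x => by
        simp only [map_smul, RingHom.id_apply]
        exact intervalIntegral.integral_smul _ _ }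
    (M * |a|) (fun x => by
      have := intervalIntegral.norm_integral_le_of_norm_le_const (a := 0) (b := a)
        (f := fun r => S r x) (C := M * ‖x‖) (fun r _ => (S r).le_of_opNorm_le (hM r) x)
      simp only [sub_zero] at this
      calc _ ≤ M * ‖x‖ * |a| := this
        _ = _ := by ring)

variable {S : ℝ → X →L[ℝ] X} {hc : ∀ x, Continuous fun t => S t x} {M : ℝ}
  {hM : ∀ t, ‖S t‖ ≤ M} {a : ℝ}

lemma smoothing_apply (x : X) : smoothing S hc M hM a x = ∫ r in (0 : ℝ)..a, S r x := rfl

variable [CompleteSpace X]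

lemma smoothing_comm (hadd : ∀ s t : ℝ, 0 ≤ s → 0 ≤ t → S (s + t) = (S s).comp (S t))
    (ha : 0 ≤ a) {t : ℝ} (ht : 0 ≤ t) (x : X) :
    smoothing S hc M hM a (S t x) = S t (smoothing S hc M hM a x) := by
  rw [smoothing_apply, smoothing_apply,
    ← (S t).intervalIntegral_comp_comm ((hc x).intervalIntegrable _ _)]
  refine intervalIntegral.integral_congr fun r hr => ?_
  rw [uIcc_of_le ha] at hr
  have h1 := hadd t r ht hr.1
  rw [add_comm, hadd r t hr.1 ht] at h1
  exact DFunLike.congr_fun h1 x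

/-- The range of `R_a` lies in the domain, with `A^* R_a x = S(a) x - S(0) x`. -/
lemma smoothing_gen (hadd : ∀ s t : ℝ, 0 ≤ s → 0 ≤ t → S (s + t) = (S s).comp (S t))
    (ha : 0 ≤ a) (x : X) :
    HasDerivWithinAt (fun t => S t (smoothing S hc M hM a x)) (S a x - S 0 x) (Ici 0) 0 := by
  have hF : ∀ t, HasDerivAt (fun t => ∫ r in (0 : ℝ)..t, S r x) (S t x) t := fun t =>
    ((hc x).integral_hasStrictDerivAt 0 t).hasDerivAt
  have h1 : HasDerivAt (fun t => (∫ r in (0 : ℝ)..(a + t), S r x) - ∫ r in (0 : ℝ)..t, S r x)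
      (S a x - S 0 x) 0 := by
    refine HasDerivAt.sub ?_ (hF 0)
    exact HasDerivAt.comp_const_add a 0 (by simpa using hF a)
  refine h1.hasDerivWithinAt.congr_of_mem (fun t ht => ?_) self_mem_Ici
  rw [smoothing_apply, ← (S t).intervalIntegral_comp_comm ((hc x).intervalIntegrable _ _),
    intervalIntegral.integral_interval_sub_left ((hc x).intervalIntegrable _ _)
      ((hc x).intervalIntegrable _ _)]
  have h2 := intervalIntegral.integral_comp_add_right (a := 0) (b := a) (fun r => S r x) t
  rw [zero_add] at h2
  rw [← h2]
  refine intervalIntegral.integral_congr fun r hr => ?_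
  rw [uIcc_of_le ha] at hr
  have h1 := hadd t r ht hr.1
  rw [add_comm] at h1
  exact (DFunLike.congr_fun h1 x).symm

/-- On the domain, `A^*` commutes with `R_a`. -/
lemma smoothing_gen' (hadd : ∀ s t : ℝ, 0 ≤ s → 0 ≤ t → S (s + t) = (S s).comp (S t))
    (ha : 0 ≤ a) {x x' : X} (hx : HasDerivWithinAt (fun t => S t x) x' (Ici 0) 0) :
    HasDerivWithinAt (fun t => S t (smoothing S hc M hM a x)) (smoothing S hc M hM a x')
      (Ici 0) 0 :=
  ((smoothing S hc M hM a).hasFDerivAt.comp_hasDerivWithinAt 0 hx).congr_of_mem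
    (fun _ ht => (smoothing_comm hadd ha ht x).symm) self_mem_Ici

lemma tendsto_smoothing (h0 : S 0 = 1) (x : X) :
    Tendsto (fun a : ℝ => a⁻¹ • smoothing S hc M hM a x) (𝓝[>] 0) (𝓝 x) := by
  have h := ((hc x).integral_hasStrictDerivAt 0 0).hasDerivAt
  rw [h0, hasDerivAt_iff_tendsto_slope] at h
  refine (h.mono_left (nhdsWithin_mono _ fun a ha => (ne_of_gt ha))).congr fun a => ?_
  simp [slope, smoothing_apply]

end Semigroup

/-- A bounded semigroup (on `[0, ∞)`) that is right continuous at `0` on a dense set is strongly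
continuous. The composition with `max · 0` makes the statement global on `ℝ`. -/
lemma continuous_semigroup {X : Type*} [NormedAddCommGroup X] [NormedSpace ℝ X]
    {S : ℝ → X →L[ℝ] X} (h0 : S 0 = 1)
    (hadd : ∀ s t : ℝ, 0 ≤ s → 0 ≤ t → S (s + t) = (S s).comp (S t)) {M : ℝ}
    (hM : ∀ t, 0 ≤ t → ‖S t‖ ≤ M) {D : Set X} (hD : Dense D)
    (hcD : ∀ x ∈ D, ContinuousWithinAt (fun t => S t x) (Ici 0) 0) (x : X) :
    Continuous fun t : ℝ => S (max t 0) x := by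
  have hM0 : 0 ≤ M := (norm_nonneg _).trans (hM 0 le_rfl)
  have h1 : ∀ ε > 0, ∃ δ > 0, ∀ t, 0 ≤ t → t < δ → ‖S t x - x‖ < ε := by
    intro ε hε
    obtain ⟨y, hy, hxy⟩ := hD.exists_dist_lt x (ε := ε / (2 * (M + 1))) (by positivity)
    obtain ⟨δ, hδ, h⟩ := Metric.continuousWithinAt_iff.1 (hcD y hy) (ε / 2) (by positivity)
    refine ⟨δ, hδ, fun t ht htδ => ?_⟩
    have h2 : ‖S t y - y‖ < ε / 2 := by
      have := h (x := t) ht (by simpa [abs_of_nonneg ht] using htδ)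
      simpa [h0, dist_eq_norm] using this
    rw [dist_eq_norm, lt_div_iff₀ (by positivity)] at hxy
    have h3 : ‖S t (x - y)‖ ≤ M * ‖x - y‖ := (S t).le_of_opNorm_le (hM t ht) _
    have h4 : S t x - x = S t (x - y) + (S t y - y) - (x - y) := by rw [map_sub]; abel
    rw [h4]
    calc _ ≤ ‖S t (x - y)‖ + ‖S t y - y‖ + ‖x - y‖ :=
          (norm_sub_le _ _).trans (by gcongr; exact norm_add_le _ _)
      _ < ε := by linarith
  have h2 : ∀ s t, 0 ≤ s → s ≤ t → ‖S t x - S s x‖ ≤ M * ‖S (t - s) x - x‖ := by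
    intro s t hs hst
    have := hadd s (t - s) hs (sub_nonneg.2 hst)
    rw [add_sub_cancel] at this
    rw [this, ContinuousLinearMap.comp_apply, ← map_sub]
    exact (S s).le_of_opNorm_le (hM s hs) _
  rw [Metric.continuous_iff]
  intro b ε hε
  obtain ⟨δ, hδ, h⟩ := h1 (ε / (M + 1)) (by positivity)
  refine ⟨δ, hδ, fun t ht => ?_⟩
  have h3 : |max t 0 - max b 0| < δ := (abs_max_sub_max_le_abs t b 0).trans_lt ht
  have h4 : ∀ r, ‖S r x - x‖ < ε / (M + 1) → M * ‖S r x - x‖ < ε := by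
    intro r hr
    rw [lt_div_iff₀ (by positivity)] at hr
    nlinarith [norm_nonneg (S r x - x)]
  rw [abs_lt] at h3
  rw [dist_eq_norm]
  rcases le_total (max b 0) (max t 0) with hle | hle
  · exact (h2 _ _ (le_max_right _ _) hle).trans_lt (h4 _ (h _ (by linarith) (by linarith)))
  · rw [norm_sub_rev]
    exact (h2 _ _ (le_max_right _ _) hle).trans_lt (h4 _ (h _ (by linarith) (by linarith)))

/-! ### The Lyapunov equation -/

/-- The integrated Lyapunov equation for a solution `P` that is weakly continuous on the whole
space, with `K` in place of `B^*`. The hypothesis on `P` quantifies over pairs `(x, x')` in the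
graph of the generator of `S`. -/
lemma lyapunov_integral {X U : Type*} [NormedAddCommGroup X] [InnerProductSpace ℝ X]
    [CompleteSpace X] [NormedAddCommGroup U] [InnerProductSpace ℝ U]
    {S : ℝ → X →L[ℝ] X} (h0 : S 0 = 1)
    (hadd : ∀ s t : ℝ, 0 ≤ s → 0 ≤ t → S (s + t) = (S s).comp (S t))
    (hc : ∀ x, Continuous fun t => S t x)
    {P : ℝ → X →L[ℝ] X} {K : X →L[ℝ] U}
    (hsym : ∀ s, 0 ≤ s → ∀ x y, ⟪P s x, y⟫ = ⟪P s y, x⟫) (hP0 : P 0 = 0)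
    (hPc : ∀ x y, ContinuousOn (fun s => ⟪P s x, y⟫) (Ici 0))
    (hPd : ∀ x x' y y', HasDerivWithinAt (fun t => S t x) x' (Ici 0) 0 →
      HasDerivWithinAt (fun t => S t y) y' (Ici 0) 0 → ∀ t, 0 < t →
      HasDerivAt (fun s => ⟪P s x, y⟫) (⟪P t x, y'⟫ + ⟪x', P t y⟫ + ⟪K x, K y⟫) t)
    {x x' y y' : X} (hx : HasDerivWithinAt (fun t => S t x) x' (Ici 0) 0)
    (hy : HasDerivWithinAt (fun t => S t y) y' (Ici 0) 0) {t : ℝ} (ht : 0 ≤ t) :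
    ⟪P t x, y⟫ = ∫ r in (0 : ℝ)..t, ⟪K (S r x), K (S r y)⟫ := by
  obtain ⟨C, hC⟩ := exists_bound_of_weak_continuousOn hPc t
  have hback : ∀ {z z' : X}, HasDerivWithinAt (fun t => S t z) z' (Ici 0) 0 → ∀ s ∈ Ioo 0 t,
      HasDerivAt (fun s => S (t - s) z) (-S (t - s) z') s := by
    intro z z' hz s hs
    exact HasDerivAt.comp_const_sub t s (hasDerivAt_gen h0 hadd hc hz (sub_pos.2 hs.2))
  have hcb : ∀ z, Continuous fun s => S (t - s) z := fun z =>
    (hc z).comp (continuous_const.sub continuous_id)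
  have hKc : Continuous fun r => ⟪K (S r x), K (S r y)⟫ :=
    (K.continuous.comp (hc x)).inner (K.continuous.comp (hc y))
  have hcont : ContinuousOn (fun s => ⟪P s (S (t - s) x), S (t - s) y⟫) (Icc 0 t) := by
    intro s hs
    have hCs : ∀ᶠ r in 𝓝[Icc 0 t] s, ‖P r‖ ≤ C :=
      eventually_nhdsWithin_of_forall hC
    have hxs : Tendsto (fun r => S (t - r) x) (𝓝[Icc 0 t] s) (𝓝 (S (t - s) x)) :=
      (hcb x).continuousAt.continuousWithinAt
    have hb : ∀ᶠ r in 𝓝[Icc 0 t] s, ‖S (t - r) x‖ ≤ ‖S (t - s) x‖ + 1 :=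
      (hxs.norm.eventually_lt_const (lt_add_one _)).mono fun _ h => h.le
    refine tendsto_inner_weak_strong (C := C * (‖S (t - s) x‖ + 1))
      (tendsto_weak_apply (hsym s hs.1)
        (eventually_nhdsWithin_of_forall fun r hr => hsym r hr.1)
        (fun x y => (hPc x y s hs.1).mono Icc_subset_Ici_self) hCs hxs) ?_
      (hcb y).continuousAt.continuousWithinAt
    filter_upwards [hCs, hb] with r h1 h2
    exact (P r).le_of_opNorm_le_of_le h1 h2
  have hderiv : ∀ s ∈ Ioo 0 t, HasDerivAt (fun s => ⟪P s (S (t - s) x), S (t - s) y⟫)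
      ⟪K (S (t - s) x), K (S (t - s) y)⟫ s := by
    intro s hs
    have hts : 0 ≤ t - s := (sub_pos.2 hs.2).le
    have hpos : ∀ᶠ r in 𝓝 s, 0 ≤ r := (lt_mem_nhds hs.1).mono fun _ h => le_of_lt h
    have h1 := hasDerivAt_inner_apply (P := P) (C := C) (hpos.mono hsym)
      (fun x y => (hPc x y).continuousAt (Ici_mem_nhds hs.1))
      (Filter.mem_of_superset (Icc_mem_nhds hs.1 hs.2) hC) (hback hx s hs) (hback hy s hs)
      (hPd _ _ _ _ (gen_apply hadd hx hts) (gen_apply hadd hy hts) s hs.1)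
    convert h1 using 1
    rw [inner_neg_right, inner_neg_right, real_inner_comm (P s (S (t - s) y))]
    ring
  have hint := intervalIntegral.integral_eq_sub_of_hasDerivAt_of_le ht hcont hderiv
    ((hKc.comp (continuous_const.sub continuous_id)).intervalIntegrable _ _)
  have hsub := intervalIntegral.integral_comp_sub_left (a := 0) (b := t)
    (fun r => ⟪K (S r x), K (S r y)⟫) t
  simp only [sub_self, sub_zero] at hsub
  rw [← hsub]
  simpa [hP0, h0] using hint.symm

open scoped RealInnerProductSpace

/-- Uniqueness for the differential Lyapunov equation: any family `Qf(t)` of selfadjoint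
nonnegative operators with `Qf(0) = 0` solving the Lyapunov equation in weak sense
coincides with the controllability operators `Q_t`. -/
theorem stmt_4
    {X U : Type*}
    [NormedAddCommGroup X] [InnerProductSpace ℝ X] [CompleteSpace X]
    [NormedAddCommGroup U] [InnerProductSpace ℝ U] [CompleteSpace U]
    -- the strongly continuous semigroup `e^{tA}`
    (T : ℝ → X →L[ℝ] X)
    (hT0 : T 0 = 1)
    (hTsg : ∀ s t : ℝ, 0 ≤ s → 0 ≤ t → T (s + t) = (T s).comp (T t))
    (hTcont : ∀ x : X, Continuous fun t : ℝ => T t x)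
    -- negative type
    (M ω : ℝ) (hM : 0 < M) (hω : 0 < ω)
    (hTnorm : ∀ t : ℝ, 0 ≤ t → ‖T t‖ ≤ M * Real.exp (-ω * t))
    -- the control operator
    (B : U →L[ℝ] X)
    -- the generator `A^*` of the adjoint semigroup, with dense domain
    (domAs : Set X) (Astar : X → X)
    (hdomAs : ∀ x : X, x ∈ domAs ↔
      ∃ y : X, HasDerivWithinAt (fun t : ℝ => (ContinuousLinearMap.adjoint (T t)) x) y
        (Set.Ici 0) 0)
    (hAs : ∀ x ∈ domAs, HasDerivWithinAt
      (fun t : ℝ => (ContinuousLinearMap.adjoint (T t)) x) (Astar x) (Set.Ici 0) 0)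
    (hdense : Dense domAs)
    -- the controllability operators `Q_t`
    (Q : ℝ → X →L[ℝ] X)
    (hQ : ∀ (t : ℝ) (x : X), Q t x =
      ∫ r in Set.Ioc (0:ℝ) t,
        T r (B ((ContinuousLinearMap.adjoint B) ((ContinuousLinearMap.adjoint (T r)) x))))
    -- the weak solution `Qf` of the differential Lyapunov equation
    (Qf : ℝ → X →L[ℝ] X)
    (hQfsa : ∀ t : ℝ, 0 ≤ t → IsSelfAdjoint (Qf t))
    (hQfpos : ∀ t : ℝ, 0 ≤ t → ∀ x : X, 0 ≤ ⟪Qf t x, x⟫)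
    (hQf0 : Qf 0 = 0)
    (hQfcont : ∀ x ∈ domAs, ∀ y ∈ domAs,
      ContinuousOn (fun t : ℝ => ⟪Qf t x, y⟫) (Set.Ici 0))
    (hQfderiv : ∀ x ∈ domAs, ∀ y ∈ domAs, ∀ t : ℝ, 0 < t →
      HasDerivAt (fun s : ℝ => ⟪Qf s x, y⟫)
        (⟪Qf t x, Astar y⟫ + ⟪Astar x, Qf t y⟫ +
          ⟪(ContinuousLinearMap.adjoint B) x, (ContinuousLinearMap.adjoint B) y⟫) t) :
    ∀ t : ℝ, 0 ≤ t → Qf t = Q t := by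
  -- at negative times `(T t)^*` need not be strongly continuous, so it is replaced by the identity
  set S : ℝ → X →L[ℝ] X := fun t => ContinuousLinearMap.adjoint (T (max t 0)) with hS
  have hSpos : ∀ t, 0 ≤ t → S t = ContinuousLinearMap.adjoint (T t) := fun t ht => by
    simp [hS, max_eq_left ht]
  have hTM : ∀ t, 0 ≤ t → ‖T t‖ ≤ M := fun t ht => (hTnorm t ht).trans <| by
    have : Real.exp (-ω * t) ≤ 1 := Real.exp_le_one_iff.2 (by nlinarith)
    nlinarith
  have hSM : ∀ t, ‖S t‖ ≤ M := fun t => by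
    simpa [hS] using hTM _ (le_max_right t 0)
  have h0 : S 0 = 1 := by
    rw [hSpos 0 le_rfl, hT0]; exact ContinuousLinearMap.adjoint_id
  have hadd : ∀ s t : ℝ, 0 ≤ s → 0 ≤ t → S (s + t) = (S s).comp (S t) := by
    intro s t hs ht
    rw [hSpos _ hs, hSpos _ ht, hSpos _ (add_nonneg hs ht), add_comm, hTsg t s ht hs,
      ContinuousLinearMap.adjoint_comp]
  have hgen : ∀ x y : X, HasDerivWithinAt (fun t => S t x) y (Set.Ici 0) 0 ↔
      HasDerivWithinAt (fun t : ℝ => (ContinuousLinearMap.adjoint (T t)) x) y (Set.Ici 0) 0 := by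
    intro x y
    refine ⟨fun h => h.congr_of_mem (fun t ht => ?_) Set.self_mem_Ici,
      fun h => h.congr_of_mem (fun t ht => ?_) Set.self_mem_Ici⟩ <;> rw [hSpos t ht]
  have hc : ∀ x, Continuous fun t => S t x := by
    intro x
    have := continuous_semigroup h0 hadd (fun t _ => hSM t) hdense
      (fun x hx => ((hgen _ _).2 (hAs x hx)).continuousWithinAt) x
    simpa [hS] using this
  have hdom : ∀ x y : X, HasDerivWithinAt (fun t => S t x) y (Set.Ici 0) 0 →
      x ∈ domAs ∧ Astar x = y := by
    intro x y h
    have h' := (hgen _ _).1 h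
    have hx : x ∈ domAs := (hdomAs x).2 ⟨y, h'⟩
    exact ⟨hx, (uniqueDiffWithinAt_Ici 0).eq_deriv _ (hAs x hx) h'⟩
  intro t ht
  -- the weak form of the controllability operator
  have hQinner : ∀ x y : X, ⟪Q t x, y⟫ = ∫ r in (0 : ℝ)..t,
      ⟪ContinuousLinearMap.adjoint B (S r x), ContinuousLinearMap.adjoint B (S r y)⟫ := by
    intro x y
    have hcT : ContinuousOn (fun r => T r (B (ContinuousLinearMap.adjoint B (S r x))))
        (Set.Icc 0 t) := by
      intro r hr
      have hz : Continuous fun r => B (ContinuousLinearMap.adjoint B (S r x)) :=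
        B.continuous.comp ((ContinuousLinearMap.adjoint B).continuous.comp (hc x))
      set z := fun r => B (ContinuousLinearMap.adjoint B (S r x)) with hzdef
      have h1 : Tendsto (fun q => T q (z q - z r)) (𝓝[Set.Icc 0 t] r) (𝓝 0) := by
        have h2 : Tendsto (fun q => M * ‖z q - z r‖) (𝓝[Set.Icc 0 t] r) (𝓝 0) := by
          have hzr : Tendsto z (𝓝[Set.Icc 0 t] r) (𝓝 (z r)) :=
            hz.continuousAt.continuousWithinAt
          have := (tendsto_iff_norm_sub_tendsto_zero.1 hzr).const_mul M
          simpa using this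
        refine squeeze_zero_norm' ?_ h2
        exact eventually_nhdsWithin_of_forall fun q hq =>
          (T q).le_of_opNorm_le (hTM q hq.1) _
      have h3 := h1.add ((hTcont (z r)).continuousAt (x := r)).continuousWithinAt.tendsto
      rw [zero_add] at h3
      exact h3.congr fun q => by rw [← map_add, sub_add_cancel]
    have hint : IntegrableOn (fun r => T r (B (ContinuousLinearMap.adjoint B (S r x))))
        (Set.Ioc 0 t) := (hcT.integrableOn_Icc).mono_set Set.Ioc_subset_Icc_self
    have hQ' : Q t x = ∫ r in Set.Ioc (0 : ℝ) t,
        T r (B (ContinuousLinearMap.adjoint B (S r x))) := by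
      rw [hQ]
      refine setIntegral_congr_fun measurableSet_Ioc fun r hr => ?_
      simp only [hSpos r hr.1.le]
    rw [hQ', real_inner_comm, ← integral_inner hint, intervalIntegral.integral_of_le ht]
    refine setIntegral_congr_fun measurableSet_Ioc fun r hr => ?_
    simp only [hSpos r hr.1.le]
    rw [real_inner_comm, ← ContinuousLinearMap.adjoint_inner_right (T r),
      ← ContinuousLinearMap.adjoint_inner_right B]
  -- agreement after smoothing
  have hsmooth : ∀ a : ℝ, 0 < a → ∀ x ∈ domAs, ∀ y ∈ domAs,
      ⟪Qf t (smoothing S hc M hSM a x), smoothing S hc M hSM a y⟫ =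
        ⟪Q t (smoothing S hc M hSM a x), smoothing S hc M hSM a y⟫ := by
    intro a ha x hx y hy
    set R := smoothing S hc M hSM a with hR
    have hRdom : ∀ x, R x ∈ domAs := fun x => (hdom _ _ (smoothing_gen hadd ha.le x)).1
    have hPin : ∀ s x y, ⟪((ContinuousLinearMap.adjoint R).comp ((Qf s).comp R)) x, y⟫ =
        ⟪Qf s (R x), R y⟫ := fun s x y => by
      simp [ContinuousLinearMap.adjoint_inner_left]
    have key := lyapunov_integral h0 hadd hc
      (P := fun s => (ContinuousLinearMap.adjoint R).comp ((Qf s).comp R))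
      (K := (ContinuousLinearMap.adjoint B).comp R) ?_ ?_ ?_ ?_
      ((hgen _ _).2 (hAs x hx)) ((hgen _ _).2 (hAs y hy)) ht
    · simp only [hPin] at key
      rw [key, hQinner]
      refine intervalIntegral.integral_congr fun r hr => ?_
      rw [Set.uIcc_of_le ht] at hr
      simp only [ContinuousLinearMap.comp_apply]
      rw [smoothing_comm hadd ha.le hr.1, smoothing_comm hadd ha.le hr.1]
    · intro s hs x y
      simp only [hPin]
      rw [real_inner_comm, ← ContinuousLinearMap.adjoint_inner_left,
        (hQfsa s hs).adjoint_eq]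
    · simp [hQf0]
    · intro x y
      simp only [hPin]
      exact hQfcont _ (hRdom x) _ (hRdom y)
    · intro x x' y y' hx hy s hs
      simp only [hPin]
      have h1 := hQfderiv _ (hRdom x) _ (hRdom y) s hs
      rw [(hdom _ _ (smoothing_gen' hadd ha.le hx)).2,
        (hdom _ _ (smoothing_gen' hadd ha.le hy)).2] at h1
      rw [real_inner_comm _ x', hPin, real_inner_comm (R x')]
      exact h1
  -- removal of the smoothing
  have hon : ∀ x ∈ domAs, ∀ y ∈ domAs, ⟪Qf t x, y⟫ = ⟪Q t x, y⟫ := by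
    intro x hx y hy
    have hlim : ∀ L : X →L[ℝ] X, Tendsto (fun a : ℝ => ⟪L (a⁻¹ • smoothing S hc M hSM a x),
        a⁻¹ • smoothing S hc M hSM a y⟫) (𝓝[>] 0) (𝓝 ⟪L x, y⟫) := fun L =>
      ((L.continuous.tendsto x).comp (tendsto_smoothing h0 x)).inner (tendsto_smoothing h0 y)
    refine tendsto_nhds_unique ((hlim (Qf t)).congr' ?_) (hlim (Q t))
    filter_upwards [self_mem_nhdsWithin] with a ha
    simp only [map_smul, inner_smul_left, inner_smul_right, hsmooth a ha x hx y hy]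
  ext1 x
  refine congrFun (Continuous.ext_on hdense (Qf t).continuous (Q t).continuous
    fun x hx => ?_) x
  refine ext_inner_right ℝ fun y => ?_
  exact congrFun (Continuous.ext_on hdense (continuous_const.inner continuous_id)
    (continuous_const.inner continuous_id) fun y hy => hon x hx y hy) y
end

section
/- (Uniqueness for the algebraic Lyapunov equation.) Assume D(A^*) is dense in X. Let Q ∈ L(X) be selfadjoint and nonnegative and satisfy ⟨Qx, A^*y⟩_X + ⟨A^*x, Qy⟩_X + ⟨B^*x, B^*y⟩_U = 0 for all x, y ∈ D(A^*). Then Q = Q_∞, where Q_∞ x = ∫_0^∞ e^{rA}BB^*e^{rA^*}x dr. -/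
/-!
For `x, y` in the domain of `A^*` the function `g t = ⟪Q e^{tA^*}x, e^{tA^*}y⟫` is continuous on
`[0, ∞)`. Since `e^{tA^*}` preserves the domain and commutes with `A^*` there, the Lyapunov equation
says that `g` has right derivative `-⟪B^* e^{tA^*}x, B^* e^{tA^*}y⟫`. As the semigroup has negative
type, `g` vanishes at infinity, so integrating over `[0, ∞)` gives `⟪Q x, y⟫ = ⟪Q_∞ x, y⟫`. Density
of the domain then yields `Q = Q_∞`. One-sided derivatives suffice because the fundamental theorem
of calculus only asks for right derivatives of a continuous function. Working with `x` in the domain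
also makes strong continuity of the adjoint semigroup immediate.
-/

open MeasureTheory
open scoped RealInnerProductSpace

open Set Filter Topology ContinuousLinearMap

/-- Pairing a strongly continuous, uniformly bounded family of operators with a continuous curve
gives a continuous curve. -/
lemma continuousOn_family_apply {X : Type*} [NormedAddCommGroup X] [NormedSpace ℝ X]
    {T : ℝ → X →L[ℝ] X} (hT : ∀ x, Continuous fun t => T t x) {C : ℝ}
    (hC : ∀ t, 0 ≤ t → ‖T t‖ ≤ C) {v : ℝ → X} (hv : ContinuousOn v (Ici 0)) :
    ContinuousOn (fun t => T t (v t)) (Ici 0) := by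
  intro s hs
  have h1 : Tendsto (fun t => T t (v t - v s)) (𝓝[Ici 0] s) (𝓝 0) := by
    have h2 : Tendsto (fun t => C * ‖v t - v s‖) (𝓝[Ici 0] s) (𝓝 0) := by
      have h3 := ((hv s hs).tendsto.sub_const (v s)).norm.const_mul C
      simpa using h3
    refine squeeze_zero_norm' ?_ h2
    filter_upwards [self_mem_nhdsWithin] with t ht
    exact (T t).le_of_opNorm_le (hC t ht) _
  have h4 : Tendsto (fun t => T t (v s)) (𝓝[Ici 0] s) (𝓝 (T s (v s))) :=
    ((hT (v s)).tendsto s).mono_left nhdsWithin_le_nhds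
  have h5 := h1.add h4
  simpa [ContinuousWithinAt] using h5

/-- An orbit of a bounded semigroup that is right continuous at `0` is continuous on `[0, ∞)`. -/
lemma continuousOn_orbit {X : Type*} [NormedAddCommGroup X] [NormedSpace ℝ X]
    {S : ℝ → X →L[ℝ] X} (h0 : S 0 = 1)
    (hS : ∀ s t, 0 ≤ s → 0 ≤ t → S (s + t) = (S s).comp (S t)) {C : ℝ}
    (hC : ∀ t, 0 ≤ t → ‖S t‖ ≤ C) {x : X}
    (hx : ContinuousWithinAt (fun t => S t x) (Ici 0) 0) :
    ContinuousOn (fun t => S t x) (Ici 0) := by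
  have key : ∀ s t, 0 ≤ s → s ≤ t → ‖S t x - S s x‖ ≤ C * ‖S |t - s| x - x‖ := by
    intro s t hs hst
    have h1 : S t x = S s (S (t - s) x) := by
      have h2 := hS s (t - s) hs (by linarith)
      rw [add_sub_cancel] at h2
      rw [h2]; rfl
    rw [h1, ← map_sub, abs_of_nonneg (by linarith)]
    exact (S s).le_of_opNorm_le (hC s hs) _
  intro s hs
  have h1 : Tendsto (fun t => |t - s|) (𝓝[Ici 0] s) (𝓝[Ici 0] 0) := by
    refine tendsto_nhdsWithin_iff.2 ⟨?_, Eventually.of_forall fun t => abs_nonneg (t - s)⟩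
    have h2 : Continuous fun t : ℝ => |t - s| := by fun_prop
    simpa using (h2.tendsto s).mono_left nhdsWithin_le_nhds
  have h2 : Tendsto (fun t => C * ‖S |t - s| x - x‖) (𝓝[Ici 0] s) (𝓝 0) := by
    have h3 := ((hx.tendsto.comp h1).sub_const x).norm.const_mul C
    simpa [h0] using h3
  refine tendsto_iff_norm_sub_tendsto_zero.2 (squeeze_zero' ?_ ?_ h2)
  · exact Eventually.of_forall fun t => norm_nonneg _
  · filter_upwards [self_mem_nhdsWithin] with t ht
    rcases le_total s t with h | h
    · exact key s t hs h
    · rw [norm_sub_rev, abs_sub_comm]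
      exact key t s ht h

/-- An orbit that is right differentiable at `0` is right differentiable at every `t ≥ 0`. -/
lemma hasDerivWithinAt_orbit {X : Type*} [NormedAddCommGroup X] [NormedSpace ℝ X]
    {S : ℝ → X →L[ℝ] X} (hS : ∀ s t, 0 ≤ s → 0 ≤ t → S (s + t) = (S s).comp (S t)) {x y : X}
    (hx : HasDerivWithinAt (fun t => S t x) y (Ici 0) 0) {t : ℝ} (ht : 0 ≤ t) :
    HasDerivWithinAt (fun r => S r x) (S t y) (Ici t) t := by
  have h1 : HasDerivWithinAt (fun r : ℝ => r - t) 1 (Ici t) t :=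
    ((hasDerivAt_id t).sub_const t).hasDerivWithinAt
  have h2 := hx.scomp_of_eq t h1 (fun r hr => sub_nonneg.2 (mem_Ici.1 hr)) (sub_self t).symm
  have h3 := (S t).hasFDerivAt.comp_hasDerivWithinAt t h2
  rw [one_smul] at h3
  refine h3.congr_of_mem (fun r hr => ?_) self_mem_Ici
  have h4 := hS t (r - t) ht (by simpa using hr)
  rw [add_sub_cancel] at h4
  simp [h4]

/-- Commutation of a semigroup with its generator: if `y` is the right derivative at `0` of the
orbit of `x`, then `S t y` is that of the orbit of `S t x`. -/
lemma hasDerivWithinAt_orbit_map {X : Type*} [NormedAddCommGroup X] [NormedSpace ℝ X]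
    {S : ℝ → X →L[ℝ] X} (hS : ∀ s t, 0 ≤ s → 0 ≤ t → S (s + t) = (S s).comp (S t)) {x y : X}
    (hx : HasDerivWithinAt (fun t => S t x) y (Ici 0) 0) {t : ℝ} (ht : 0 ≤ t) :
    HasDerivWithinAt (fun r => S r (S t x)) (S t y) (Ici 0) 0 := by
  have h3 := (S t).hasFDerivAt.comp_hasDerivWithinAt (0 : ℝ) hx
  refine h3.congr_of_mem (fun r hr => ?_) self_mem_Ici
  have h4 := (hS r t hr ht).symm.trans ((congrArg S (add_comm r t)).trans (hS t r ht hr))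
  exact congrArg (fun L : X →L[ℝ] X => L x) h4

/-- Uniqueness for the algebraic Lyapunov equation: any selfadjoint nonnegative
`Q ∈ L(X)` with `⟨Qx, A^*y⟩ + ⟨A^*x, Qy⟩ + ⟨B^*x, B^*y⟩ = 0` for all `x, y ∈ D(A^*)`
equals `Q_∞`. -/
theorem stmt_5
    {X U : Type*}
    [NormedAddCommGroup X] [InnerProductSpace ℝ X] [CompleteSpace X]
    [NormedAddCommGroup U] [InnerProductSpace ℝ U] [CompleteSpace U]
    -- the strongly continuous semigroup `e^{tA}`
    (T : ℝ → X →L[ℝ] X)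
    (hT0 : T 0 = 1)
    (hTsg : ∀ s t : ℝ, 0 ≤ s → 0 ≤ t → T (s + t) = (T s).comp (T t))
    (hTcont : ∀ x : X, Continuous fun t : ℝ => T t x)
    -- negative type
    (M ω : ℝ) (hM : 0 < M) (hω : 0 < ω)
    (hTnorm : ∀ t : ℝ, 0 ≤ t → ‖T t‖ ≤ M * Real.exp (-ω * t))
    -- the control operator
    (B : U →L[ℝ] X)
    -- the generator `A^*` of the adjoint semigroup, with dense domain
    (domAs : Set X) (Astar : X → X)
    (hdomAs : ∀ x : X, x ∈ domAs ↔
      ∃ y : X, HasDerivWithinAt (fun t : ℝ => (ContinuousLinearMap.adjoint (T t)) x) y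
        (Set.Ici 0) 0)
    (hAs : ∀ x ∈ domAs, HasDerivWithinAt
      (fun t : ℝ => (ContinuousLinearMap.adjoint (T t)) x) (Astar x) (Set.Ici 0) 0)
    (hdense : Dense domAs)
    -- the controllability operator `Q_∞`
    (Qinf : X →L[ℝ] X)
    (hQinf : ∀ x : X, Qinf x =
      ∫ r in Set.Ioi (0:ℝ),
        T r (B ((ContinuousLinearMap.adjoint B) ((ContinuousLinearMap.adjoint (T r)) x))))
    -- the weak solution `Q` of the algebraic Lyapunov equation
    (Q : X →L[ℝ] X)
    (hQsa : IsSelfAdjoint Q)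
    (hQpos : ∀ x : X, 0 ≤ ⟪Q x, x⟫)
    (hQlyap : ∀ x ∈ domAs, ∀ y ∈ domAs,
      ⟪Q x, Astar y⟫ + ⟪Astar x, Q y⟫ +
        ⟪(ContinuousLinearMap.adjoint B) x, (ContinuousLinearMap.adjoint B) y⟫ = 0) :
    Q = Qinf := by
  set S : ℝ → X →L[ℝ] X := fun t => adjoint (T t) with hSdef
  have hS0 : S 0 = 1 := by
    change adjoint (T 0) = 1
    rw [hT0]; exact star_one (X →L[ℝ] X)
  have hSsg : ∀ s t, 0 ≤ s → 0 ≤ t → S (s + t) = (S s).comp (S t) := by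
    intro s t hs ht
    change adjoint (T (s + t)) = _
    rw [add_comm, hTsg t s ht hs, adjoint_comp]
  have hSnorm : ∀ t, 0 ≤ t → ‖S t‖ ≤ M * Real.exp (-ω * t) := by
    intro t ht
    change ‖adjoint (T t)‖ ≤ _
    rw [LinearIsometryEquiv.norm_map]; exact hTnorm t ht
  have hexp : ∀ t, 0 ≤ t → M * Real.exp (-ω * t) ≤ M := by
    intro t ht
    have h1 : Real.exp (-ω * t) ≤ 1 := Real.exp_le_one_iff.2 (by nlinarith)
    nlinarith
  have hTM : ∀ t, 0 ≤ t → ‖T t‖ ≤ M := fun t ht => (hTnorm t ht).trans (hexp t ht)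
  have hSM : ∀ t, 0 ≤ t → ‖S t‖ ≤ M := fun t ht => (hSnorm t ht).trans (hexp t ht)
  have hScont : ∀ x ∈ domAs, ContinuousOn (fun t => S t x) (Ici 0) := fun x hx =>
    continuousOn_orbit hS0 hSsg hSM (hAs x hx).continuousWithinAt
  have hSdom : ∀ x ∈ domAs, ∀ t, 0 ≤ t → S t x ∈ domAs ∧ Astar (S t x) = S t (Astar x) := by
    intro x hx t ht
    have h1 := hasDerivWithinAt_orbit_map hSsg (hAs x hx) ht
    have h2 : S t x ∈ domAs := (hdomAs _).2 ⟨_, h1⟩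
    exact ⟨h2, (uniqueDiffOn_Ici (0 : ℝ) 0 self_mem_Ici).eq_deriv _ (hAs _ h2) h1⟩
  have hSlim : ∀ x, Tendsto (fun t => S t x) atTop (𝓝 0) := by
    intro x
    have h1 : Tendsto (fun t : ℝ => M * Real.exp (-ω * t) * ‖x‖) atTop (𝓝 0) := by
      have h2 : Tendsto (fun t : ℝ => -ω * t) atTop atBot :=
        tendsto_id.const_mul_atTop_of_neg (by linarith)
      simpa using ((Real.tendsto_exp_atBot.comp h2).const_mul M).mul_const ‖x‖
    refine squeeze_zero_norm' ?_ h1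
    filter_upwards [eventually_ge_atTop 0] with t ht
    exact (S t).le_of_opNorm_le (hSnorm t ht) _
  have hint : ∀ x ∈ domAs,
      IntegrableOn (fun r => T r (B (adjoint B (S r x)))) (Ioi 0) := by
    intro x hx
    have hc : ContinuousOn (fun r => T r (B (adjoint B (S r x)))) (Ici 0) :=
      continuousOn_family_apply hTcont hTM
        (B.continuous.comp_continuousOn ((adjoint B).continuous.comp_continuousOn (hScont x hx)))
    have hg : IntegrableOn (fun r : ℝ => M * (‖B‖ * (‖adjoint B‖ * (‖x‖ * (M * Real.exp (-ω * r))))))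
        (Ioi 0) :=
      ((((integrableOn_exp_mul_Ioi (neg_lt_zero.2 hω) 0).const_mul M).const_mul ‖x‖).const_mul
        ‖adjoint B‖ |>.const_mul ‖B‖).const_mul M
    refine Integrable.mono' hg
      ((hc.mono Ioi_subset_Ici_self).aestronglyMeasurable measurableSet_Ioi) ?_
    filter_upwards [ae_restrict_mem measurableSet_Ioi] with r hr
    have hr0 : (0 : ℝ) ≤ r := le_of_lt hr
    have h1 : ‖S r x‖ ≤ ‖x‖ * (M * Real.exp (-ω * r)) := by
      rw [mul_comm]; exact (S r).le_of_opNorm_le (hSnorm r hr0) x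
    refine ((T r).le_of_opNorm_le (hTM r hr0) _).trans ?_
    gcongr
    refine (B.le_opNorm _).trans ?_
    gcongr
    refine ((adjoint B).le_opNorm _).trans ?_
    gcongr
  have hQadj : ∀ a b : X, ⟪Q a, b⟫ = ⟪a, Q b⟫ := by
    intro a b
    have h1 : adjoint Q = Q := hQsa.adjoint_eq
    rw [← adjoint_inner_right, h1]
  have hmain : ∀ x ∈ domAs, ∀ y ∈ domAs, ⟪Q x, y⟫ = ⟪Qinf x, y⟫ := by
    intro x hx y hy
    set f : ℝ → ℝ := fun r => ⟪y, T r (B (adjoint B (S r x)))⟫ with hf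
    have hfint : IntegrableOn f (Ioi 0) := (hint x hx).const_inner y
    have hfval : ∫ r in Ioi 0, f r = ⟪Qinf x, y⟫ := by
      rw [hQinf, real_inner_comm]
      exact integral_inner (hint x hx) y
    have hfeq : ∀ r, f r = ⟪adjoint B (S r x), adjoint B (S r y)⟫ := by
      intro r
      simp only [hf]
      rw [real_inner_comm, adjoint_inner_right, ← adjoint_inner_right (T r)]
    set g : ℝ → ℝ := fun t => ⟪Q (S t x), S t y⟫ with hg
    have hgcont : ContinuousOn g (Ici 0) :=
      (Q.continuous.comp_continuousOn (hScont x hx)).inner (𝕜 := ℝ) (hScont y hy)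
    have hgderiv : ∀ t, 0 ≤ t → HasDerivWithinAt g (-f t) (Ici t) t := by
      intro t ht
      obtain ⟨hxd, hxA⟩ := hSdom x hx t ht
      obtain ⟨hyd, hyA⟩ := hSdom y hy t ht
      have h1 := Q.hasFDerivAt.comp_hasDerivWithinAt t (hasDerivWithinAt_orbit hSsg (hAs x hx) ht)
      have h2 := h1.inner ℝ (hasDerivWithinAt_orbit hSsg (hAs y hy) ht)
      refine h2.congr_deriv ?_
      have h3 := hQlyap _ hxd _ hyd
      rw [hxA, hyA] at h3
      rw [hfeq, hQadj (S t (Astar x))]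
      simp only [Function.comp_apply]
      linarith
    have hFTC : ∀ b, 0 ≤ b → ∫ r in (0 : ℝ)..b, f r = g 0 - g b := by
      intro b hb
      have hii : IntervalIntegrable f volume 0 b :=
        (intervalIntegrable_iff_integrableOn_Ioc_of_le hb).2 (hfint.mono_set Ioc_subset_Ioi_self)
      have h1 := intervalIntegral.integral_eq_sub_of_hasDeriv_right (f := g) (f' := fun t => -f t)
        (a := 0) (b := b)
        (hgcont.mono (by rw [uIcc_of_le hb]; exact Icc_subset_Ici_self))
        (fun t ht => (hgderiv t (by rw [min_eq_left hb] at ht; exact ht.1.le)).mono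
          Ioi_subset_Ici_self) hii.neg
      rw [intervalIntegral.integral_neg] at h1
      linarith
    have hlim1 : Tendsto (fun b => ∫ r in (0 : ℝ)..b, f r) atTop (𝓝 ⟪Qinf x, y⟫) := by
      rw [← hfval]
      exact intervalIntegral_tendsto_integral_Ioi 0 hfint tendsto_id
    have hlim2 : Tendsto (fun b => g 0 - g b) atTop (𝓝 ⟪Q x, y⟫) := by
      have h1 : Tendsto g atTop (𝓝 0) := by
        simpa using ((Q.continuous.tendsto 0).comp (hSlim x)).inner (𝕜 := ℝ) (hSlim y)
      have h2 := h1.const_sub (g 0)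
      simpa [hg, hS0] using h2
    refine tendsto_nhds_unique hlim2 (hlim1.congr' ?_)
    filter_upwards [eventually_ge_atTop 0] with b hb using hFTC b hb
  have hdom : ∀ x ∈ domAs, Q x = Qinf x := by
    intro x hx
    refine ext_inner_right ℝ fun y => ?_
    have h1 : (fun y => ⟪Q x, y⟫) = fun y => ⟪Qinf x, y⟫ :=
      Continuous.ext_on hdense (by fun_prop) (by fun_prop) (fun y hy => hmain x hx y hy)
    exact congrFun h1 y
  exact DFunLike.coe_injective (Continuous.ext_on hdense Q.continuous Qinf.continuous hdom)
end

section
/- For every t ∈ [0,∞) and every x ∈ D(A^*), one has Q_t x ∈ D(A) and A(Q_t x) = e^{tA}BB^*e^{tA^*}x − BB^*x − Q_t(A^*x). -/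
/-!
Write `F r = e^{rA} B B^* e^{rA^*} x`. Since `e^{rA^*} e^{hA^*} = e^{(h+r)A^*}`, the semigroup law
gives `e^{hA} Q_t e^{hA^*} x = ∫_0^t F (h + r) dr = ∫_0^{h+t} F - ∫_0^h F`, hence
`e^{hA} Q_t x = (∫_0^{h+t} F - ∫_0^h F) - e^{hA} Q_t (e^{hA^*} x - x)`.
Both terms on the right are differentiable from the right at `h = 0`: the first by the fundamental
theorem of calculus, the second because `(e^{hA^*} x - x) / h → A^* x` while `e^{hA}` is strongly
continuous and bounded.

Continuity of `F` on `[0, ∞)` does not need strong continuity of the whole adjoint semigroup: for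
`x ∈ D(A^*)` the orbit `r ↦ e^{rA^*} x` is right continuous at `0`, and the semigroup law with the
bound on the norms propagates this to `[0, ∞)` (`continuous_adjoint_orbit`).

The hypotheses give the semigroup law only for nonnegative times, so integrands are written with
`max r 0` in place of `r`, which makes them continuous on all of `ℝ`.
-/

open MeasureTheory
open scoped RealInnerProductSpace

open Filter Topology

/-- Operators that are eventually bounded in norm and converge at the limit point `y₀` may be applied
to an argument that itself converges to `y₀`. -/
lemma tendsto_apply_of_bounded {X ι : Type*} [NormedAddCommGroup X] [NormedSpace ℝ X]
    {l : Filter ι} {L : ι → X →L[ℝ] X} {L₀ : X →L[ℝ] X} {M : ℝ} (hM : ∀ᶠ i in l, ‖L i‖ ≤ M)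
    {y : ι → X} {y₀ : X} (hL : Tendsto (fun i => L i y₀) l (𝓝 (L₀ y₀)))
    (hy : Tendsto y l (𝓝 y₀)) : Tendsto (fun i => L i (y i)) l (𝓝 (L₀ y₀)) := by
  have h1 : Tendsto (fun i => L i (y i - y₀)) l (𝓝 0) := by
    have h2 : Tendsto (fun i => M * ‖y i - y₀‖) l (𝓝 0) := by
      have := (tendsto_iff_norm_sub_tendsto_zero.1 hy).const_mul M
      simpa using this
    refine squeeze_zero_norm' ?_ h2
    filter_upwards [hM] with i hi
    exact (L i).le_of_opNorm_le hi _
  simpa using h1.add hL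

/-- An orbit of the adjoint semigroup that is right continuous at `0` is continuous on `[0, ∞)`. -/
lemma continuous_adjoint_orbit {X : Type*} [NormedAddCommGroup X] [InnerProductSpace ℝ X]
    [CompleteSpace X] {T : ℝ → X →L[ℝ] X} (hT0 : T 0 = 1)
    (hTsg : ∀ s t : ℝ, 0 ≤ s → 0 ≤ t → T (s + t) = (T s).comp (T t))
    {M : ℝ} (hb : ∀ t : ℝ, 0 ≤ t → ‖T t‖ ≤ M) {x : X}
    (hx : ContinuousWithinAt (fun t : ℝ => (ContinuousLinearMap.adjoint (T t)) x)
      (Set.Ici 0) 0) :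
    Continuous fun r : ℝ => (ContinuousLinearMap.adjoint (T (max r 0))) x := by
  have key : ∀ a b : ℝ, 0 ≤ a → a ≤ b →
      ‖ContinuousLinearMap.adjoint (T b) x - ContinuousLinearMap.adjoint (T a) x‖
        ≤ M * ‖ContinuousLinearMap.adjoint (T |b - a|) x - x‖ := by
    intro a b ha hab
    have h1 : T b = (T (b - a)).comp (T a) := by
      rw [← hTsg _ _ (sub_nonneg.2 hab) ha, sub_add_cancel]
    have h2 : ContinuousLinearMap.adjoint (T b) x - ContinuousLinearMap.adjoint (T a) x
        = ContinuousLinearMap.adjoint (T a) (ContinuousLinearMap.adjoint (T |b - a|) x - x) := by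
      rw [abs_of_nonneg (sub_nonneg.2 hab), map_sub, h1, ContinuousLinearMap.adjoint_comp]
      rfl
    rw [h2]
    refine ContinuousLinearMap.le_of_opNorm_le _ ?_ _
    rw [LinearIsometryEquiv.norm_map]
    exact hb a ha
  have key2 : ∀ a b : ℝ, 0 ≤ a → 0 ≤ b →
      ‖ContinuousLinearMap.adjoint (T b) x - ContinuousLinearMap.adjoint (T a) x‖
        ≤ M * ‖ContinuousLinearMap.adjoint (T |b - a|) x - x‖ := by
    intro a b ha hb'
    rcases le_total a b with h | h
    · exact key a b ha h
    · rw [norm_sub_rev, abs_sub_comm]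
      exact key b a hb' h
  rw [continuous_iff_continuousAt]
  intro r₀
  refine tendsto_iff_norm_sub_tendsto_zero.2 ?_
  refine squeeze_zero (fun _ => norm_nonneg _)
    (fun r => key2 (max r₀ 0) (max r 0) (le_max_right _ _) (le_max_right _ _)) ?_
  have h3 : Tendsto (fun r : ℝ => |max r 0 - max r₀ 0|) (𝓝 r₀) (𝓝[Set.Ici 0] 0) := by
    refine tendsto_nhdsWithin_iff.2 ⟨?_, Eventually.of_forall fun r => Set.mem_Ici.2 (abs_nonneg _)⟩
    have : Continuous fun r : ℝ => |max r 0 - max r₀ 0| := by fun_prop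
    simpa using this.tendsto r₀
  have h4 := tendsto_iff_norm_sub_tendsto_zero.1 (hx.tendsto.comp h3)
  have h5 := h4.const_mul M
  simpa [hT0, ← ContinuousLinearMap.star_eq_adjoint, Function.comp_def] using h5

/-- Lemma 3.1(i), finite-time case: for every `t ∈ [0,∞)` and `x ∈ D(A^*)`,
`Q_t x ∈ D(A)` and `A(Q_t x) = e^{tA}BB^*e^{tA^*}x − BB^*x − Q_t(A^*x)`. -/
theorem stmt_7
    {X U : Type*}
    [NormedAddCommGroup X] [InnerProductSpace ℝ X] [CompleteSpace X]
    [NormedAddCommGroup U] [InnerProductSpace ℝ U] [CompleteSpace U]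
    -- the strongly continuous semigroup `e^{tA}`
    (T : ℝ → X →L[ℝ] X)
    (hT0 : T 0 = 1)
    (hTsg : ∀ s t : ℝ, 0 ≤ s → 0 ≤ t → T (s + t) = (T s).comp (T t))
    (hTcont : ∀ x : X, Continuous fun t : ℝ => T t x)
    -- negative type
    (M ω : ℝ) (hM : 0 < M) (hω : 0 < ω)
    (hTnorm : ∀ t : ℝ, 0 ≤ t → ‖T t‖ ≤ M * Real.exp (-ω * t))
    -- the control operator
    (B : U →L[ℝ] X)
    -- the generator `A` of the semigroup
    (domA : Set X) (A : X → X)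
    (hdomA : ∀ x : X, x ∈ domA ↔
      ∃ y : X, HasDerivWithinAt (fun t : ℝ => T t x) y (Set.Ici 0) 0)
    (hA : ∀ x ∈ domA, HasDerivWithinAt (fun t : ℝ => T t x) (A x) (Set.Ici 0) 0)
    -- the generator `A^*` of the adjoint semigroup
    (domAs : Set X) (Astar : X → X)
    (hdomAs : ∀ x : X, x ∈ domAs ↔
      ∃ y : X, HasDerivWithinAt (fun t : ℝ => (ContinuousLinearMap.adjoint (T t)) x) y
        (Set.Ici 0) 0)
    (hAs : ∀ x ∈ domAs, HasDerivWithinAt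
      (fun t : ℝ => (ContinuousLinearMap.adjoint (T t)) x) (Astar x) (Set.Ici 0) 0)
    -- the controllability operators `Q_t`
    (Q : ℝ → X →L[ℝ] X)
    (hQ : ∀ (t : ℝ) (x : X), Q t x =
      ∫ r in Set.Ioc (0:ℝ) t,
        T r (B ((ContinuousLinearMap.adjoint B) ((ContinuousLinearMap.adjoint (T r)) x)))) :
    ∀ t : ℝ, 0 ≤ t → ∀ x ∈ domAs,
      Q t x ∈ domA ∧
      A (Q t x) =
        T t (B ((ContinuousLinearMap.adjoint B) ((ContinuousLinearMap.adjoint (T t)) x)))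
          - B ((ContinuousLinearMap.adjoint B) x) - Q t (Astar x) := by
  intro t ht x hx
  have hb : ∀ r : ℝ, 0 ≤ r → ‖T r‖ ≤ M := fun r hr =>
    (hTnorm r hr).trans <| mul_le_of_le_one_right hM.le <|
      Real.exp_le_one_iff.2 (by nlinarith)
  have hxd := hAs x hx
  have hS := continuous_adjoint_orbit hT0 hTsg hb hxd.continuousWithinAt
  have hadj0 : ContinuousLinearMap.adjoint (T 0) x = x := by
    rw [hT0, ← ContinuousLinearMap.star_eq_adjoint, star_one]; rfl
  have hTy : ∀ y : ℝ → X, Continuous y → Continuous fun r => T (max r 0) (y r) := by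
    intro y hy
    rw [continuous_iff_continuousAt]
    intro r₀
    refine tendsto_apply_of_bounded (M := M) (Eventually.of_forall fun r => hb _ (le_max_right _ _))
      ?_ (hy.tendsto r₀)
    exact ((hTcont (y r₀)).comp (continuous_id.max continuous_const)).tendsto r₀
  set F : ℝ → X := fun r => T (max r 0) (B (ContinuousLinearMap.adjoint B
    (ContinuousLinearMap.adjoint (T (max r 0)) x))) with hF
  have hFc : Continuous F :=
    hTy _ (B.continuous.comp ((ContinuousLinearMap.adjoint B).continuous.comp hS))
  have hint : ∀ h : ℝ, 0 ≤ h → T h (Q t (ContinuousLinearMap.adjoint (T h) x))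
      = (∫ r in (0:ℝ)..(h + t), F r) - ∫ r in (0:ℝ)..h, F r := by
    intro h hh
    have e1 : Q t (ContinuousLinearMap.adjoint (T h) x) = ∫ r in (0:ℝ)..t,
        T (max r 0) (B (ContinuousLinearMap.adjoint B
          (ContinuousLinearMap.adjoint (T (max (h + r) 0)) x))) := by
      rw [hQ, intervalIntegral.integral_of_le ht]
      refine setIntegral_congr_fun measurableSet_Ioc fun r hr => ?_
      have hr0 : 0 ≤ r := hr.1.le
      simp only [max_eq_left hr0, max_eq_left (add_nonneg hh hr0)]
      rw [hTsg h r hh hr0, ContinuousLinearMap.adjoint_comp]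
      rfl
    have hc : Continuous fun r : ℝ => T (max r 0) (B (ContinuousLinearMap.adjoint B
          (ContinuousLinearMap.adjoint (T (max (h + r) 0)) x))) :=
      hTy _ (B.continuous.comp ((ContinuousLinearMap.adjoint B).continuous.comp
        (hS.comp (continuous_const.add continuous_id))))
    rw [e1, ← ContinuousLinearMap.intervalIntegral_comp_comm _ (hc.intervalIntegrable _ _),
      intervalIntegral.integral_interval_sub_left (hFc.intervalIntegrable _ _)
        (hFc.intervalIntegrable _ _)]
    have e2 : ∫ r in (0:ℝ)..t, F (h + r) = ∫ r in h..(h + t), F r := by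
      rw [intervalIntegral.integral_comp_add_left F h, add_zero]
    rw [← e2]
    refine intervalIntegral.integral_congr fun r hr => ?_
    rw [Set.uIcc_of_le ht] at hr
    simp only [hF, max_eq_left hr.1, max_eq_left (add_nonneg hh hr.1)]
    rw [hTsg h r hh hr.1]
    rfl
  have hd1 : HasDerivAt (fun h : ℝ => (∫ r in (0:ℝ)..(h + t), F r) - ∫ r in (0:ℝ)..h, F r)
      (F t - F 0) 0 := by
    have g : ∀ u : ℝ, HasDerivAt (fun u : ℝ => ∫ r in (0:ℝ)..u, F r) (F u) u := fun u =>
      hFc.integral_hasStrictDerivAt 0 u |>.hasDerivAt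
    have g1 := (g (0 + t)).comp_add_const 0 t
    rw [zero_add] at g1
    exact g1.sub (g 0)
  have hd2 : HasDerivWithinAt
      (fun h : ℝ => T h (Q t (ContinuousLinearMap.adjoint (T h) x - x)))
      (Q t (Astar x)) (Set.Ici 0) 0 := by
    rw [hasDerivWithinAt_iff_tendsto_slope] at hxd ⊢
    have h1 := ((Q t).continuous.tendsto (Astar x)).comp hxd
    have h2 := tendsto_apply_of_bounded (L := T) (L₀ := T 0) (M := M)
      (l := 𝓝[Set.Ici 0 \ {0}] (0:ℝ))
      (eventually_nhdsWithin_of_forall fun r hr => hb r hr.1)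
      (((hTcont (Q t (Astar x))).tendsto 0).mono_left nhdsWithin_le_nhds) h1
    rw [hT0] at h2
    refine h2.congr fun h => ?_
    simp [slope, hadj0]
  have hd : HasDerivWithinAt (fun h : ℝ => T h (Q t x)) (F t - F 0 - Q t (Astar x))
      (Set.Ici 0) 0 := by
    refine (hd1.hasDerivWithinAt.sub hd2).congr_of_mem (fun h hh => ?_) Set.self_mem_Ici
    simp only [Pi.sub_apply]
    rw [← hint h hh, map_sub, map_sub, sub_sub_cancel]
  have hdom : Q t x ∈ domA := (hdomA _).2 ⟨_, hd⟩
  refine ⟨hdom, ?_⟩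
  rw [(uniqueDiffOn_Ici (0:ℝ) 0 Set.self_mem_Ici).eq_deriv _ (hA _ hdom) hd]
  simp only [hF, max_eq_left ht, max_self, hadj0]
  rw [hT0]
  rfl
end

section
/- For every x ∈ D(A^*), one has Q_∞ x ∈ D(A) and A(Q_∞ x) = −BB^*x − Q_∞(A^*x), where Q_∞ x = ∫_0^∞ e^{rA}BB^*e^{rA^*}x dr. -/
open MeasureTheory
open scoped RealInnerProductSpace

/-!
For `h ≥ 0`, write `G r = e^{rA} BB^* e^{rA^*} x`. The semigroup law and the substitution
`r ↦ r + h` give `e^{hA} Q_∞ e^{hA^*} x = ∫_h^∞ G`, that is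
`e^{hA} Q_∞ x = Q_∞ x - ∫_0^h G - e^{hA} Q_∞ (e^{hA^*} x - x)`.
For `x ∈ D(A^*)` the right-hand side has right derivative `-G 0 - Q_∞ (A^* x)` at `h = 0`,
which is the claim.

Strong continuity of the adjoint semigroup on all of `X` is not needed: the orbit of
a vector of `D(A^*)` is continuous because it is continuous from the right at `0`
(`continuousOn_adjoint_orbit`). This makes `G` continuous on `[0, ∞)`, and since it decays
exponentially it is integrable.
-/

open Set Filter Topology

section

variable {X : Type*} [NormedAddCommGroup X] [InnerProductSpace ℝ X]

/-- A strongly continuous, uniformly bounded family of operators preserves convergence of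
a moving argument. -/
lemma tendsto_apply_of_bounded_s8 {T : ℝ → X →L[ℝ] X} {M : ℝ}
    (hTcont : ∀ x : X, Continuous fun t : ℝ => T t x)
    (hTM : ∀ t : ℝ, 0 ≤ t → ‖T t‖ ≤ M) {l : Filter ℝ} {s : ℝ}
    (hl : Tendsto id l (𝓝 s)) (hpos : ∀ᶠ r in l, 0 ≤ r)
    {v : ℝ → X} {w : X} (hv : Tendsto v l (𝓝 w)) :
    Tendsto (fun r => T r (v r)) l (𝓝 (T s w)) := by
  have h1 : Tendsto (fun r => T r w) l (𝓝 (T s w)) := ((hTcont w).tendsto s).comp hl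
  have h2 : Tendsto (fun r => T r (v r - w)) l (𝓝 0) := by
    refine squeeze_zero_norm' (a := fun r => M * ‖v r - w‖) ?_ ?_
    · filter_upwards [hpos] with r hr
      exact (T r).le_of_opNorm_le (hTM r hr) _
    · have := (tendsto_iff_norm_sub_tendsto_zero.1 hv).const_mul M
      simpa using this
  simpa using h1.add h2

variable [CompleteSpace X]

lemma adjoint_semigroup_apply {T : ℝ → X →L[ℝ] X}
    (hTsg : ∀ s t : ℝ, 0 ≤ s → 0 ≤ t → T (s + t) = (T s).comp (T t))
    {s t : ℝ} (hs : 0 ≤ s) (ht : 0 ≤ t) (x : X) :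
    ContinuousLinearMap.adjoint (T (s + t)) x =
      ContinuousLinearMap.adjoint (T s) (ContinuousLinearMap.adjoint (T t) x) := by
  rw [add_comm, hTsg t s ht hs, ContinuousLinearMap.adjoint_comp]
  rfl

/-- An orbit of the adjoint of a bounded semigroup that is right-continuous at `0` is continuous
on `[0, ∞)`, because `‖e^{tA^*} x - e^{sA^*} x‖ ≤ M ‖e^{|t - s|A^*} x - x‖`. -/
lemma continuousOn_adjoint_orbit {T : ℝ → X →L[ℝ] X} {M : ℝ}
    (hT0 : T 0 = 1)
    (hTsg : ∀ s t : ℝ, 0 ≤ s → 0 ≤ t → T (s + t) = (T s).comp (T t))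
    (hTM : ∀ t : ℝ, 0 ≤ t → ‖T t‖ ≤ M) {x : X}
    (hx : ContinuousWithinAt (fun t : ℝ => ContinuousLinearMap.adjoint (T t) x) (Ici 0) 0) :
    ContinuousOn (fun t : ℝ => ContinuousLinearMap.adjoint (T t) x) (Ici 0) := by
  have key : ∀ s t : ℝ, 0 ≤ s → s ≤ t →
      ‖ContinuousLinearMap.adjoint (T t) x - ContinuousLinearMap.adjoint (T s) x‖ ≤
        M * ‖ContinuousLinearMap.adjoint (T |t - s|) x - x‖ := by
    intro s t hs hst
    have hd : 0 ≤ t - s := sub_nonneg.2 hst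
    have h1 := adjoint_semigroup_apply hTsg hs hd x
    rw [add_sub_cancel] at h1
    rw [h1, ← map_sub, abs_of_nonneg hd]
    refine ContinuousLinearMap.le_of_opNorm_le _ ?_ _
    rw [LinearIsometryEquiv.norm_map]
    exact hTM s hs
  intro s hs
  have hs0 : (0 : ℝ) ≤ s := hs
  have habs : Tendsto (fun t : ℝ => |t - s|) (𝓝[Ici 0] s) (𝓝[Ici 0] 0) := by
    refine tendsto_nhdsWithin_iff.2 ⟨?_, Eventually.of_forall fun t => mem_Ici.2 (abs_nonneg _)⟩
    have : Continuous fun t : ℝ => |t - s| := by fun_prop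
    simpa using (this.tendsto s).mono_left nhdsWithin_le_nhds
  have h0 : Tendsto (fun t : ℝ => ContinuousLinearMap.adjoint (T t) x) (𝓝[Ici 0] 0) (𝓝 x) := by
    simpa [ContinuousWithinAt, hT0, ← ContinuousLinearMap.star_eq_adjoint] using hx
  have h1 := ((tendsto_iff_norm_sub_tendsto_zero.1 h0).comp habs).const_mul M
  rw [mul_zero] at h1
  refine tendsto_iff_norm_sub_tendsto_zero.2 ?_
  refine squeeze_zero' (Eventually.of_forall fun _ => norm_nonneg _) ?_ h1
  filter_upwards [self_mem_nhdsWithin] with t ht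
  rcases le_total s t with hst | hst
  · exact key s t hs0 hst
  · have := key t s ht hst
    rw [norm_sub_rev, abs_sub_comm] at this
    exact this

variable {U : Type*} [NormedAddCommGroup U] [InnerProductSpace ℝ U] [CompleteSpace U]

lemma continuousOn_gramian_integrand {T : ℝ → X →L[ℝ] X} {M : ℝ}
    (hTcont : ∀ x : X, Continuous fun t : ℝ => T t x)
    (hTM : ∀ t : ℝ, 0 ≤ t → ‖T t‖ ≤ M) (B : U →L[ℝ] X) {x : X}
    (hx : ContinuousOn (fun t : ℝ => ContinuousLinearMap.adjoint (T t) x) (Ici 0)) :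
    ContinuousOn (fun r => T r (B (ContinuousLinearMap.adjoint B
      (ContinuousLinearMap.adjoint (T r) x)))) (Ici 0) := fun s hs =>
  tendsto_apply_of_bounded_s8 hTcont hTM (tendsto_id.mono_left nhdsWithin_le_nhds)
    self_mem_nhdsWithin
    ((B.continuous.comp (ContinuousLinearMap.adjoint B).continuous).continuousAt.tendsto.comp
      (hx s hs))

lemma integrableOn_gramian_integrand {T : ℝ → X →L[ℝ] X} {M ω : ℝ}
    (hTcont : ∀ x : X, Continuous fun t : ℝ => T t x) (hω : 0 < ω)
    (hTnorm : ∀ t : ℝ, 0 ≤ t → ‖T t‖ ≤ M * Real.exp (-ω * t))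
    (hTM : ∀ t : ℝ, 0 ≤ t → ‖T t‖ ≤ M) (B : U →L[ℝ] X) {x : X}
    (hx : ContinuousOn (fun t : ℝ => ContinuousLinearMap.adjoint (T t) x) (Ici 0)) :
    IntegrableOn (fun r => T r (B (ContinuousLinearMap.adjoint B
      (ContinuousLinearMap.adjoint (T r) x)))) (Ioi 0) := by
  have hdom : IntegrableOn
      (fun r : ℝ => (M * (‖B‖ * (‖B‖ * (M * ‖x‖)))) * Real.exp (-ω * r)) (Ioi 0) :=
    (integrableOn_exp_mul_Ioi (neg_neg_of_pos hω) 0).const_mul _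
  refine Integrable.mono' hdom
    (((continuousOn_gramian_integrand hTcont hTM B hx).mono
      Ioi_subset_Ici_self).aestronglyMeasurable measurableSet_Ioi) ?_
  refine (ae_restrict_iff' measurableSet_Ioi).2 (Eventually.of_forall fun r hr => ?_)
  have hr0 : (0 : ℝ) ≤ r := le_of_lt hr
  have e1 : ‖ContinuousLinearMap.adjoint (T r) x‖ ≤ M * ‖x‖ :=
    ContinuousLinearMap.le_of_opNorm_le _
      (by rw [LinearIsometryEquiv.norm_map]; exact hTM r hr0) _
  have e2 : ‖ContinuousLinearMap.adjoint B (ContinuousLinearMap.adjoint (T r) x)‖ ≤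
      ‖B‖ * (M * ‖x‖) :=
    ContinuousLinearMap.le_of_opNorm_le_of_le _ (by rw [LinearIsometryEquiv.norm_map]) e1
  have e3 := ContinuousLinearMap.le_of_opNorm_le_of_le B le_rfl e2
  refine (ContinuousLinearMap.le_of_opNorm_le_of_le (T r) (hTnorm r hr0) e3).trans_eq ?_
  ring

end

/-- Lemma 3.1(i), infinite-time case: for every `x ∈ D(A^*)`,
`Q_∞ x ∈ D(A)` and `A(Q_∞ x) = −BB^*x − Q_∞(A^*x)`. -/
theorem stmt_8
    {X U : Type*}
    [NormedAddCommGroup X] [InnerProductSpace ℝ X] [CompleteSpace X]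
    [NormedAddCommGroup U] [InnerProductSpace ℝ U] [CompleteSpace U]
    -- the strongly continuous semigroup `e^{tA}`
    (T : ℝ → X →L[ℝ] X)
    (hT0 : T 0 = 1)
    (hTsg : ∀ s t : ℝ, 0 ≤ s → 0 ≤ t → T (s + t) = (T s).comp (T t))
    (hTcont : ∀ x : X, Continuous fun t : ℝ => T t x)
    -- negative type
    (M ω : ℝ) (hM : 0 < M) (hω : 0 < ω)
    (hTnorm : ∀ t : ℝ, 0 ≤ t → ‖T t‖ ≤ M * Real.exp (-ω * t))
    -- the control operator
    (B : U →L[ℝ] X)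
    -- the generator `A` of the semigroup
    (domA : Set X) (A : X → X)
    (hdomA : ∀ x : X, x ∈ domA ↔
      ∃ y : X, HasDerivWithinAt (fun t : ℝ => T t x) y (Set.Ici 0) 0)
    (hA : ∀ x ∈ domA, HasDerivWithinAt (fun t : ℝ => T t x) (A x) (Set.Ici 0) 0)
    -- the generator `A^*` of the adjoint semigroup
    (domAs : Set X) (Astar : X → X)
    (hdomAs : ∀ x : X, x ∈ domAs ↔
      ∃ y : X, HasDerivWithinAt (fun t : ℝ => (ContinuousLinearMap.adjoint (T t)) x) y
        (Set.Ici 0) 0)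
    (hAs : ∀ x ∈ domAs, HasDerivWithinAt
      (fun t : ℝ => (ContinuousLinearMap.adjoint (T t)) x) (Astar x) (Set.Ici 0) 0)
    -- the controllability operator `Q_∞`
    (Qinf : X →L[ℝ] X)
    (hQinf : ∀ x : X, Qinf x =
      ∫ r in Set.Ioi (0:ℝ),
        T r (B ((ContinuousLinearMap.adjoint B) ((ContinuousLinearMap.adjoint (T r)) x)))) :
    ∀ x ∈ domAs,
      Qinf x ∈ domA ∧
      A (Qinf x) = - B ((ContinuousLinearMap.adjoint B) x) - Qinf (Astar x) := by
  intro x hx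
  have hderx := hAs x hx
  have hTM : ∀ t : ℝ, 0 ≤ t → ‖T t‖ ≤ M := fun t ht =>
    (hTnorm t ht).trans (mul_le_of_le_one_right hM.le (Real.exp_le_one_iff.2 (by nlinarith)))
  have hφ := continuousOn_adjoint_orbit hT0 hTsg hTM hderx.continuousWithinAt
  set G : ℝ → X := fun r =>
    T r (B ((ContinuousLinearMap.adjoint B) ((ContinuousLinearMap.adjoint (T r)) x))) with hG
  have hGcont : ContinuousOn G (Ici 0) := continuousOn_gramian_integrand hTcont hTM B hφ
  have hGint : IntegrableOn G (Ioi 0) :=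
    integrableOn_gramian_integrand hTcont hω hTnorm hTM B hφ
  -- `e^{hA} Q_∞ e^{hA^*} x` is the tail of the integral defining `Q_∞ x`
  have htail : ∀ h : ℝ, 0 ≤ h →
      T h (Qinf (ContinuousLinearMap.adjoint (T h) x)) = ∫ r in Ioi h, G r := by
    intro h hh
    have hψ : ContinuousOn (fun t : ℝ => ContinuousLinearMap.adjoint (T t)
        (ContinuousLinearMap.adjoint (T h) x)) (Ici 0) := by
      refine ((ContinuousLinearMap.adjoint (T h)).continuous.comp_continuousOn hφ).congr
        fun t ht => ?_
      simp only [Function.comp]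
      rw [← adjoint_semigroup_apply hTsg ht hh, add_comm, adjoint_semigroup_apply hTsg hh ht]
    rw [hQinf, ← ContinuousLinearMap.integral_comp_comm _
      (integrableOn_gramian_integrand hTcont hω hTnorm hTM B hψ)]
    have hshift := (measurePreserving_add_right volume h).setIntegral_preimage_emb
      (measurableEmbedding_addRight h) G (Ioi h)
    simp only [preimage_add_const_Ioi, sub_self] at hshift
    rw [← hshift]
    refine setIntegral_congr_fun measurableSet_Ioi fun r hr => ?_
    have hr0 : (0 : ℝ) ≤ r := le_of_lt hr
    simp only [hG]
    rw [adjoint_semigroup_apply hTsg hr0 hh, add_comm r h, hTsg h r hh hr0]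
    rfl
  have hdecomp : ∀ h ∈ Ici (0 : ℝ), T h (Qinf x) = Qinf x - (∫ r in (0 : ℝ)..h, G r)
      - T h (Qinf (ContinuousLinearMap.adjoint (T h) x - x)) := by
    intro h hh
    have hh0 : (0 : ℝ) ≤ h := hh
    rw [← intervalIntegral.integral_Ioi_sub_Ioi hGint hh0, ← htail h hh0, hQinf x, map_sub,
      map_sub, ← hQinf x]
    abel
  have hd1 : HasDerivWithinAt (fun h => ∫ r in (0 : ℝ)..h, G r) (G 0) (Ici 0) 0 :=
    intervalIntegral.integral_hasDerivWithinAt_right (t := Ioi 0)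
      IntervalIntegrable.refl
      ((hGcont.mono Ioi_subset_Ici_self).stronglyMeasurableAtFilter_nhdsWithin
        measurableSet_Ioi 0)
      ((hGcont 0 self_mem_Ici).mono Ioi_subset_Ici_self)
  have hT0x : ContinuousLinearMap.adjoint (T 0) x = x := by
    simp [hT0, ← ContinuousLinearMap.star_eq_adjoint]
  have hd2 : HasDerivWithinAt
      (fun h => T h (Qinf (ContinuousLinearMap.adjoint (T h) x - x))) (Qinf (Astar x))
      (Ici 0) 0 := by
    rw [hasDerivWithinAt_iff_tendsto_slope, Ici_sdiff_left] at hderx ⊢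
    have h1 := tendsto_apply_of_bounded_s8 hTcont hTM (tendsto_id.mono_left nhdsWithin_le_nhds)
      (mem_of_superset self_mem_nhdsWithin fun r (hr : (0 : ℝ) < r) => hr.le)
      ((Qinf.continuous.tendsto _).comp hderx)
    rw [hT0] at h1
    refine h1.congr fun h => ?_
    simp [slope_def_module, hT0x]
  have hd : HasDerivWithinAt (fun h => T h (Qinf x)) (0 - G 0 - Qinf (Astar x)) (Ici 0) 0 :=
    (((hasDerivWithinAt_const _ _ _).sub hd1).sub hd2).congr hdecomp
      (hdecomp 0 self_mem_Ici)
  have hmem : Qinf x ∈ domA := (hdomA _).2 ⟨_, hd⟩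
  refine ⟨hmem, ?_⟩
  rw [(uniqueDiffOn_Ici 0 0 self_mem_Ici).eq_deriv _ (hA _ hmem) hd]
  simp only [hG, hT0x]
  simp [hT0]
end

section
/- Assume each e^{tA} is selfadjoint (i.e. A is selfadjoint) and that BB^* commutes with the semigroup: e^{tA}∘B∘B^* = B∘B^*∘e^{tA} for all t ≥ 0. Then, without any null controllability assumption, range(Q_t) = range(Q_∞) for every t ∈ (0,∞). -/
/-!
Write `S = BB^*`. Selfadjointness, commutation and the semigroup law turn the integrand
`e^{rA} S e^{rA^*} x` into `S e^{2rA} x` for `r ≥ 0`. Hence shifting the variable by `t` in the tail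
`∫_t^∞` of `Q_∞` gives `Q_∞ - Q_t = Q_∞ e^{2tA}`, that is `Q_t = Q_∞ (I - e^{2tA})`.
Powers of `e^{2tA}` are eventually of norm less than one because of the negative type, so
`I - e^{2tA}` is invertible, in particular surjective, and the two ranges agree.
-/

open MeasureTheory
open scoped RealInnerProductSpace

/-- If some power of `a` has norm less than one, then `1 - a` is invertible: it is a factor of the
invertible element `1 - a ^ n`, and the cofactor `∑ i < n, a ^ i` commutes with it. -/
lemma isUnit_one_sub_of_norm_pow_lt_one {R : Type*} [NormedRing R] [HasSummableGeomSeries R]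
    (a : R) (n : ℕ) (h : ‖a ^ n‖ < 1) : IsUnit (1 - a) := by
  have h1 : IsUnit (1 - a ^ n) := isUnit_one_sub_of_norm_lt_one h
  have hc : Commute (1 - a) (∑ i ∈ Finset.range n, a ^ i) :=
    ((Commute.one_left _).sub_left
      (Commute.sum_right _ _ _ fun i _ => (Commute.refl a).pow_right i))
  rw [← mul_neg_geom_sum] at h1
  exact (hc.isUnit_mul_iff.mp h1).1

/-- Proposition C.2(iii), first part: in the selfadjoint commuting case, without any
null controllability assumption, `R(Q_t) = R(Q_∞)` for every `t ∈ (0,∞)`. -/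
theorem stmt_15
    {X U : Type*}
    [NormedAddCommGroup X] [InnerProductSpace ℝ X] [CompleteSpace X]
    [NormedAddCommGroup U] [InnerProductSpace ℝ U] [CompleteSpace U]
    -- the strongly continuous semigroup `e^{tA}`, selfadjoint
    (T : ℝ → X →L[ℝ] X)
    (hT0 : T 0 = 1)
    (hTsg : ∀ s t : ℝ, 0 ≤ s → 0 ≤ t → T (s + t) = (T s).comp (T t))
    (hTcont : ∀ x : X, Continuous fun t : ℝ => T t x)
    (hTsa : ∀ t : ℝ, 0 ≤ t → IsSelfAdjoint (T t))
    -- negative type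
    (M ω : ℝ) (hM : 0 < M) (hω : 0 < ω)
    (hTnorm : ∀ t : ℝ, 0 ≤ t → ‖T t‖ ≤ M * Real.exp (-ω * t))
    -- the control operator, with `BB^*` commuting with the semigroup
    (B : U →L[ℝ] X)
    (hcomm : ∀ t : ℝ, 0 ≤ t →
      (T t).comp (B.comp (ContinuousLinearMap.adjoint B))
        = (B.comp (ContinuousLinearMap.adjoint B)).comp (T t))
    -- the controllability operators `Q_t`, `Q_∞`
    (Q : ℝ → X →L[ℝ] X)
    (hQ : ∀ (t : ℝ) (x : X), Q t x =
      ∫ r in Set.Ioc (0:ℝ) t,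
        T r (B ((ContinuousLinearMap.adjoint B) ((ContinuousLinearMap.adjoint (T r)) x))))
    (Qinf : X →L[ℝ] X)
    (hQinf : ∀ x : X, Qinf x =
      ∫ r in Set.Ioi (0:ℝ),
        T r (B ((ContinuousLinearMap.adjoint B) ((ContinuousLinearMap.adjoint (T r)) x)))) :
    ∀ t : ℝ, 0 < t → Set.range (Q t) = Set.range Qinf := by
  intro t ht
  set S : X →L[ℝ] X := B.comp (ContinuousLinearMap.adjoint B) with hS
  have hadj : ∀ r : ℝ, 0 ≤ r → ContinuousLinearMap.adjoint (T r) = T r := fun r hr => hTsa r hr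
  have hint : ∀ x : X, ∀ r : ℝ, 0 ≤ r →
      T r (B ((ContinuousLinearMap.adjoint B) ((ContinuousLinearMap.adjoint (T r)) x)))
        = S (T (2 * r) x) := by
    intro x r hr
    have h := DFunLike.congr_fun (hcomm r hr) (T r x)
    rw [hadj r hr, two_mul, hTsg r r hr hr]
    exact h
  have hQ' : ∀ x, Q t x = ∫ r in Set.Ioc (0:ℝ) t, S (T (2 * r) x) := fun x => by
    rw [hQ]
    exact setIntegral_congr_fun measurableSet_Ioc fun r hr => hint x r hr.1.le
  have hQinf' : ∀ x, Qinf x = ∫ r in Set.Ioi (0:ℝ), S (T (2 * r) x) := fun x => by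
    rw [hQinf]
    exact setIntegral_congr_fun measurableSet_Ioi fun r hr => hint x r (le_of_lt hr)
  have hI : ∀ x, IntegrableOn (fun r : ℝ => S (T (2 * r) x)) (Set.Ioi 0) := by
    intro x
    have hexp : IntegrableOn (fun r : ℝ => ‖S‖ * (M * ‖x‖) * Real.exp (-(2 * ω) * r))
        (Set.Ioi 0) := (exp_neg_integrableOn_Ioi 0 (by positivity : 0 < 2 * ω)).const_mul _
    refine Integrable.mono' hexp ?_ ?_
    · exact (S.continuous.comp
        ((hTcont x).comp (continuous_const.mul continuous_id))).aestronglyMeasurable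
    · refine (ae_restrict_iff' measurableSet_Ioi).mpr (Filter.Eventually.of_forall fun r hr => ?_)
      have hr0 : (0:ℝ) ≤ 2 * r := by have : (0:ℝ) < r := hr; positivity
      calc ‖S (T (2 * r) x)‖ ≤ ‖S‖ * (‖T (2 * r)‖ * ‖x‖) :=
            (S.le_opNorm _).trans (by gcongr; exact (T (2 * r)).le_opNorm x)
        _ ≤ ‖S‖ * ((M * Real.exp (-ω * (2 * r))) * ‖x‖) := by
            gcongr; exact hTnorm _ hr0
        _ = ‖S‖ * (M * ‖x‖) * Real.exp (-(2 * ω) * r) := by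
            rw [show -ω * (2 * r) = -(2 * ω) * r by ring]; ring
  have h2t : (0:ℝ) ≤ 2 * t := by positivity
  have htail : ∀ x, Qinf (T (2 * t) x) = ∫ r in Set.Ioi t, S (T (2 * r) x) := by
    intro x
    have hshift := (measurePreserving_add_right volume t).setIntegral_preimage_emb
      (measurableEmbedding_addRight t) (fun r : ℝ => S (T (2 * r) x)) (Set.Ioi t)
    rw [Set.preimage_add_const_Ioi, sub_self] at hshift
    rw [hQinf', ← hshift]
    refine setIntegral_congr_fun measurableSet_Ioi fun r hr => ?_
    have hr0 : (0:ℝ) ≤ 2 * r := by have : (0:ℝ) < r := hr; positivity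
    simp only [mul_add, hTsg _ _ hr0 h2t, ContinuousLinearMap.comp_apply]
  have hkey : ∀ x, Q t x = Qinf ((1 - T (2 * t)) x) := by
    intro x
    have hsplit := setIntegral_union (Set.Ioc_disjoint_Ioi (le_refl t)) measurableSet_Ioi
      ((hI x).mono_set Set.Ioc_subset_Ioi_self) ((hI x).mono_set (Set.Ioi_subset_Ioi ht.le))
    rw [Set.Ioc_union_Ioi_eq_Ioi ht.le, ← hQinf', ← hQ', ← htail] at hsplit
    simp [hsplit]
  have hpow : ∀ n : ℕ, T (2 * t) ^ n = T (n * (2 * t)) := by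
    intro n
    induction n with
    | zero => simp [hT0]
    | succ k ih =>
      rw [pow_succ, ih, Nat.cast_succ, add_mul, one_mul, hTsg _ _ (by positivity) h2t]
      rfl
  have hlim : Filter.Tendsto (fun n : ℕ => M * Real.exp (-ω * (n * (2 * t))))
      Filter.atTop (nhds 0) := by
    have h1 : Filter.Tendsto (fun n : ℕ => (n : ℝ) * (ω * (2 * t))) Filter.atTop Filter.atTop :=
      tendsto_natCast_atTop_atTop.atTop_mul_const (by positivity)
    have h2 := (Real.tendsto_exp_neg_atTop_nhds_zero.comp h1).const_mul M
    rw [mul_zero] at h2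
    refine h2.congr fun n => ?_
    simp only [Function.comp_apply]
    congr 2
    ring
  obtain ⟨n, hn⟩ := (hlim.eventually (gt_mem_nhds one_pos)).exists
  have hunit : IsUnit (1 - T (2 * t)) :=
    isUnit_one_sub_of_norm_pow_lt_one _ n
      (by rw [hpow]; exact (hTnorm _ (by positivity)).trans_lt hn)
  obtain ⟨R, hR, -⟩ := isUnit_iff_exists.mp hunit
  have hsurj : Function.Surjective (1 - T (2 * t) : X →L[ℝ] X) :=
    fun y => ⟨R y, DFunLike.congr_fun hR y⟩
  rw [show (Q t : X → X) = Qinf ∘ (1 - T (2 * t) : X →L[ℝ] X) from funext hkey]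
  exact hsurj.range_comp _
end

section
/- Assume each e^{tA} is selfadjoint (i.e. A is selfadjoint) and that BB^* commutes with the semigroup: e^{tA}∘B∘B^* = B∘B^*∘e^{tA} for all t ≥ 0. Then, without any null controllability assumption, range(Q_t^{1/2}) = range(Q_∞^{1/2}) for every t ∈ (0,∞). -/
open MeasureTheory
open scoped RealInnerProductSpace

/-!
With `G = BB^*`, commutation and the semigroup law turn the integrand `e^{rA} G e^{rA^*} x` into
`G e^{2rA} x`. Shifting the integration variable then gives `Q_∞ = Q_t + Q_∞ e^{2tA}`, and `Q_∞`
commutes with the semigroup, so that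

  `‖Q_t^{1/2} x‖² = ‖Q_∞^{1/2} x‖² - h(t)²`, where `h(s) = ‖Q_∞^{1/2} e^{sA} x‖`.

By Cauchy-Schwarz, `h(s)² = ⟪Q_∞ e^{2sA} x, x⟫ ≤ h(2s) h(0)`. Combined with the a priori bound
`h(s) ≤ K e^{-ωs}` this self-improves to `h(s) ≤ e^{-ωs} h(0)` (`decay_of_sq_le`), whence

  `(1 - e^{-2ωt}) ‖Q_∞^{1/2} x‖² ≤ ‖Q_t^{1/2} x‖² ≤ ‖Q_∞^{1/2} x‖²`.

Douglas' range inclusion (`range_subset_of_norm_le`) turns the two inequalities into the two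
inclusions. No functional calculus is needed: the square roots enter only through their squares.
-/

/-- Douglas' range inclusion for selfadjoint operators on a real Hilbert space. For fixed `y`, the
functional `C x ↦ ⟪A x, y⟫` on the range of `C` is well defined and bounded; a vector `z`
representing an extension of it satisfies `C z = A y`. -/
theorem range_subset_of_norm_le {X : Type*} [NormedAddCommGroup X] [InnerProductSpace ℝ X]
    [CompleteSpace X] (A C : X →L[ℝ] X) (hA : IsSelfAdjoint A) (hC : IsSelfAdjoint C)
    (c : ℝ) (h : ∀ x, ‖A x‖ ≤ c * ‖C x‖) : Set.range A ⊆ Set.range C := by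
  rintro _ ⟨y, rfl⟩
  obtain ⟨g, hg⟩ := (C : X →ₗ[ℝ] X).rangeRestrict.exists_rightInverse_of_surjective
    (LinearMap.range_rangeRestrict _)
  have hg' : ∀ w, C (g w) = (w : X) := fun w =>
    congrArg Subtype.val (LinearMap.congr_fun hg w)
  let φ : LinearMap.range (C : X →ₗ[ℝ] X) →ₗ[ℝ] ℝ :=
    (innerSL ℝ y : X →ₗ[ℝ] ℝ) ∘ₗ (A : X →ₗ[ℝ] X) ∘ₗ g
  have hφ : ∀ w, φ w = ⟪y, A (g w)⟫ := fun w => rfl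
  let ψ := φ.mkContinuous (‖y‖ * c) (fun w => by
    rw [hφ]
    refine (norm_inner_le_norm _ _).trans ?_
    rw [mul_assoc]
    refine mul_le_mul_of_nonneg_left ((h _).trans ?_) (norm_nonneg _)
    rw [hg']; rfl)
  obtain ⟨F, hF, -⟩ := exists_extension_norm_eq _ ψ
  refine ⟨(InnerProductSpace.toDual ℝ X).symm F, ?_⟩
  refine ext_inner_right ℝ fun x => ?_
  have hsC : ∀ a b, ⟪C a, b⟫ = ⟪a, C b⟫ := fun a b => hC.isSymmetric a b
  have hsA : ∀ a b, ⟪A a, b⟫ = ⟪a, A b⟫ := fun a b => hA.isSymmetric a b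
  rw [hsC, InnerProductSpace.toDual_symm_apply, hsA]
  let w : LinearMap.range (C : X →ₗ[ℝ] X) := ⟨C x, x, rfl⟩
  have h1 : F (C x) = ⟪y, A (g w)⟫ := hF w
  -- `A` vanishes on the kernel of `C`, so the choice of preimage is irrelevant
  have h2 : A (g w) = A x := by
    have h3 := h (g w - x)
    rw [map_sub C, hg', sub_self, norm_zero, mul_zero] at h3
    rw [← sub_eq_zero, ← map_sub]
    exact norm_le_zero_iff.1 h3
  rw [h1, h2]

/-- A midpoint-convexity type inequality upgrades the exponential bound `K e^{-ωs}` to one with the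
optimal constant `h 0`: the supremum `S` of `s ↦ h s * e^{ωs}` satisfies `S² ≤ S * h 0`. -/
theorem decay_of_sq_le (h : ℝ → ℝ) (K ω : ℝ) (h0 : ∀ s, 0 ≤ h s)
    (hsq : ∀ s, 0 ≤ s → h s ^ 2 ≤ h (2 * s) * h 0)
    (hK : ∀ s, 0 ≤ s → h s ≤ K * Real.exp (-ω * s)) :
    ∀ s, 0 ≤ s → h s ≤ Real.exp (-ω * s) * h 0 := by
  let k : {s : ℝ // 0 ≤ s} → ℝ := fun s => h s * Real.exp (ω * s)
  have hbdd : BddAbove (Set.range k) := by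
    refine ⟨K, ?_⟩
    rintro _ ⟨s, rfl⟩
    calc k s ≤ K * Real.exp (-ω * s) * Real.exp (ω * s) :=
          mul_le_mul_of_nonneg_right (hK s s.2) (Real.exp_pos _).le
      _ = K := by rw [mul_assoc, ← Real.exp_add]; simp
  have hle : ∀ s, k s ≤ ⨆ s, k s := fun s => le_ciSup hbdd s
  have : Nonempty {s : ℝ // 0 ≤ s} := ⟨⟨0, le_rfl⟩⟩
  set S := ⨆ s, k s with hS
  have hk0 : h 0 ≤ S := by simpa [k] using hle ⟨0, le_rfl⟩
  have hS0 : 0 ≤ S := (h0 0).trans hk0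
  have hsup : S ≤ √(S * h 0) := by
    refine ciSup_le fun s => Real.le_sqrt_of_sq_le ?_
    have h1 := hle ⟨2 * s, by have := s.2; positivity⟩
    calc k s ^ 2 = h s ^ 2 * Real.exp (ω * (2 * s)) := by
          simp only [k]; rw [mul_pow, ← Real.exp_nat_mul]; congr 2; push_cast; ring
      _ ≤ h (2 * s) * h 0 * Real.exp (ω * (2 * s)) :=
          mul_le_mul_of_nonneg_right (hsq s s.2) (Real.exp_pos _).le
      _ = (h (2 * s) * Real.exp (ω * (2 * s))) * h 0 := by ring
      _ ≤ S * h 0 := mul_le_mul_of_nonneg_right h1 (h0 0)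
  have hSle : S ≤ h 0 := by
    have h1 : S ^ 2 ≤ S * h 0 := by
      rw [← Real.sq_sqrt (mul_nonneg hS0 (h0 0))]; gcongr
    rcases hS0.eq_or_lt with h2 | h2
    · rw [← h2]; exact h0 0
    · nlinarith
  intro s hs
  have h1 : h s * Real.exp (ω * s) ≤ h 0 := (hle ⟨s, hs⟩).trans hSle
  calc h s = Real.exp (-ω * s) * (h s * Real.exp (ω * s)) := by
        rw [mul_left_comm, ← Real.exp_add]; simp
    _ ≤ _ := mul_le_mul_of_nonneg_left h1 (Real.exp_pos _).le

/-- Proposition C.2(iii), second part: in the selfadjoint commuting case, without any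
null controllability assumption, `R(Q_t^{1/2}) = R(Q_∞^{1/2})` for every `t ∈ (0,∞)`. -/
theorem stmt_16
    {X U : Type*}
    [NormedAddCommGroup X] [InnerProductSpace ℝ X] [CompleteSpace X]
    [NormedAddCommGroup U] [InnerProductSpace ℝ U] [CompleteSpace U]
    -- the strongly continuous semigroup `e^{tA}`, selfadjoint
    (T : ℝ → X →L[ℝ] X)
    (hT0 : T 0 = 1)
    (hTsg : ∀ s t : ℝ, 0 ≤ s → 0 ≤ t → T (s + t) = (T s).comp (T t))
    (hTcont : ∀ x : X, Continuous fun t : ℝ => T t x)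
    (hTsa : ∀ t : ℝ, 0 ≤ t → IsSelfAdjoint (T t))
    -- negative type
    (M ω : ℝ) (hM : 0 < M) (hω : 0 < ω)
    (hTnorm : ∀ t : ℝ, 0 ≤ t → ‖T t‖ ≤ M * Real.exp (-ω * t))
    -- the control operator, with `BB^*` commuting with the semigroup
    (B : U →L[ℝ] X)
    (hcomm : ∀ t : ℝ, 0 ≤ t →
      (T t).comp (B.comp (ContinuousLinearMap.adjoint B))
        = (B.comp (ContinuousLinearMap.adjoint B)).comp (T t))
    -- the controllability operators `Q_t`, `Q_∞`
    (Q : ℝ → X →L[ℝ] X)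
    (hQ : ∀ (t : ℝ) (x : X), Q t x =
      ∫ r in Set.Ioc (0:ℝ) t,
        T r (B ((ContinuousLinearMap.adjoint B) ((ContinuousLinearMap.adjoint (T r)) x))))
    (Qinf : X →L[ℝ] X)
    (hQinf : ∀ x : X, Qinf x =
      ∫ r in Set.Ioi (0:ℝ),
        T r (B ((ContinuousLinearMap.adjoint B) ((ContinuousLinearMap.adjoint (T r)) x))))
    -- the square roots `Q_t^{1/2}` and `Q_∞^{1/2}`
    (SQ : ℝ → X →L[ℝ] X)
    (hSQ : ∀ t : ℝ, 0 < t →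
      IsSelfAdjoint (SQ t) ∧ (∀ x : X, 0 ≤ ⟪SQ t x, x⟫) ∧ (SQ t).comp (SQ t) = Q t)
    (SQinf : X →L[ℝ] X)
    (hSQinf : IsSelfAdjoint SQinf ∧ (∀ x : X, 0 ≤ ⟪SQinf x, x⟫) ∧
      SQinf.comp SQinf = Qinf) :
    ∀ t : ℝ, 0 < t → Set.range (SQ t) = Set.range SQinf := by
  intro t ht
  obtain ⟨hSsa, -, hSsq⟩ := hSQ t ht
  obtain ⟨hPsa, -, hPsq⟩ := hSQinf
  set G : X →L[ℝ] X := B.comp (ContinuousLinearMap.adjoint B) with hG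
  have hGT : ∀ r, 0 ≤ r → ∀ x, T r (G x) = G (T r x) := fun r hr x =>
    DFunLike.congr_fun (hcomm r hr) x
  have hTT : ∀ r s, 0 ≤ r → 0 ≤ s → ∀ x, T (r + s) x = T r (T s x) := fun r s hr hs x =>
    DFunLike.congr_fun (hTsg r s hr hs) x
  have hint : ∀ r, 0 ≤ r → ∀ x,
      T r (B ((ContinuousLinearMap.adjoint B) ((ContinuousLinearMap.adjoint (T r)) x)))
        = G (T (2 * r) x) := by
    intro r hr x
    rw [(hTsa r hr).adjoint_eq, two_mul, hTT r r hr hr, ← hGT r hr]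
    rfl
  have hQ' : ∀ x, Q t x = ∫ r in Set.Ioc (0:ℝ) t, G (T (2 * r) x) := fun x => by
    rw [hQ]
    exact setIntegral_congr_fun measurableSet_Ioc fun r hr => hint r hr.1.le x
  have hQinf' : ∀ x, Qinf x = ∫ r in Set.Ioi (0:ℝ), G (T (2 * r) x) := fun x => by
    rw [hQinf]
    exact setIntegral_congr_fun measurableSet_Ioi fun r hr => hint r (le_of_lt hr) x
  have hcont : ∀ x, Continuous fun r : ℝ => G (T (2 * r) x) := fun x =>
    G.continuous.comp ((hTcont x).comp (continuous_const.mul continuous_id))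
  have hTx : ∀ s, 0 ≤ s → ∀ x, ‖T s x‖ ≤ M * Real.exp (-ω * s) * ‖x‖ := fun s hs x =>
    (T s).le_of_opNorm_le (hTnorm s hs) x
  have hintble : ∀ x, IntegrableOn (fun r : ℝ => G (T (2 * r) x)) (Set.Ioi 0) := by
    intro x
    have h1 : IntegrableOn (fun r : ℝ => ‖G‖ * M * ‖x‖ * Real.exp (-(2 * ω) * r))
        (Set.Ioi 0) := (exp_neg_integrableOn_Ioi 0 (by positivity)).const_mul _
    refine Integrable.mono' h1 (hcont x).aestronglyMeasurable ?_
    filter_upwards [ae_restrict_mem measurableSet_Ioi] with r hr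
    have hr : (0:ℝ) < r := hr
    calc ‖G (T (2 * r) x)‖ ≤ ‖G‖ * (M * Real.exp (-ω * (2 * r)) * ‖x‖) :=
          G.le_opNorm_of_le (hTx _ (by positivity) x)
      _ = ‖G‖ * M * ‖x‖ * Real.exp (-(2 * ω) * r) := by
          rw [show -ω * (2 * r) = -(2 * ω) * r by ring]; ring
  have hQT : ∀ s, 0 ≤ s → ∀ x, Qinf (T s x) = T s (Qinf x) := by
    intro s hs x
    rw [hQinf', hQinf', ← (T s).integral_comp_comm (hintble x)]
    refine setIntegral_congr_fun measurableSet_Ioi fun r hr => ?_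
    have hr : (0:ℝ) < r := hr
    rw [hGT s hs, ← hTT s _ hs (by positivity), ← hTT _ s (by positivity) hs, add_comm]
  have hshift : ∀ x, Qinf x = Q t x + Qinf (T (2 * t) x) := by
    intro x
    have h1 : Qinf (T (2 * t) x) = ∫ r in Set.Ioi t, G (T (2 * r) x) := by
      have h2 := (measurePreserving_add_right volume t).setIntegral_preimage_emb
        (MeasurableEquiv.addRight t).measurableEmbedding (fun r => G (T (2 * r) x)) (Set.Ioi t)
      rw [Set.preimage_add_const_Ioi, sub_self] at h2
      rw [hQinf', ← h2]
      refine setIntegral_congr_fun measurableSet_Ioi fun r hr => ?_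
      have hr : (0:ℝ) < r := hr
      rw [← hTT _ _ (by positivity) (by positivity), mul_add]
    rw [h1, hQ', hQinf', ← Set.Ioc_union_Ioi_eq_Ioi ht.le]
    exact setIntegral_union (Set.Ioc_disjoint_Ioi le_rfl) measurableSet_Ioi
      ((hintble x).mono_set Set.Ioc_subset_Ioi_self)
      ((hintble x).mono_set (Set.Ioi_subset_Ioi ht.le))
  have hPin : ∀ x y, ⟪Qinf x, y⟫ = ⟪SQinf x, SQinf y⟫ := fun x y => by
    rw [← hPsq]; exact hPsa.isSymmetric (SQinf x) y
  have hSin : ∀ x y, ⟪Q t x, y⟫ = ⟪SQ t x, SQ t y⟫ := fun x y => by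
    rw [← hSsq]; exact hSsa.isSymmetric (SQ t x) y
  have hhalf : ∀ s, 0 ≤ s → ∀ x, ⟪Qinf (T (2 * s) x), x⟫ = ‖SQinf (T s x)‖ ^ 2 := by
    intro s hs x
    rw [← real_inner_self_eq_norm_sq, ← hPin, two_mul, hTT s s hs hs, hQT s hs]
    exact (hTsa s hs).isSymmetric _ _
  have hdecay : ∀ x, ‖SQinf (T t x)‖ ≤ Real.exp (-ω * t) * ‖SQinf x‖ := by
    intro x
    have h1 := decay_of_sq_le (fun s => ‖SQinf (T s x)‖) (‖SQinf‖ * M * ‖x‖) ω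
      (fun s => norm_nonneg _) (fun s hs => by
        simp only [hT0, one_apply_eq_self]
        rw [← hhalf s hs, hPin]
        exact real_inner_le_norm _ _)
      (fun s hs => (SQinf.le_opNorm_of_le (hTx s hs x)).trans_eq (by ring)) t ht.le
    simpa [hT0] using h1
  have hkey : ∀ x, ‖SQ t x‖ ^ 2 = ‖SQinf x‖ ^ 2 - ‖SQinf (T t x)‖ ^ 2 := by
    intro x
    rw [← hhalf t ht.le, ← real_inner_self_eq_norm_sq, ← real_inner_self_eq_norm_sq, ← hSin,
      ← hPin, ← inner_sub_left, hshift x, add_sub_cancel_right]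
  have hq : Real.exp (-ω * t) < 1 := by
    rw [Real.exp_lt_one_iff]; nlinarith
  have hd : 0 < 1 - Real.exp (-ω * t) ^ 2 := by
    nlinarith [Real.exp_pos (-ω * t)]
  refine Set.Subset.antisymm
    (range_subset_of_norm_le _ _ hSsa hPsa 1 fun x => ?_)
    (range_subset_of_norm_le _ _ hPsa hSsa (√(1 - Real.exp (-ω * t) ^ 2))⁻¹ fun x => ?_)
  · rw [one_mul]
    refine (sq_le_sq₀ (by positivity) (norm_nonneg _)).1 ?_
    rw [hkey]
    exact sub_le_self _ (sq_nonneg _)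
  · rw [← div_eq_inv_mul, le_div_iff₀ (Real.sqrt_pos.2 hd)]
    refine (sq_le_sq₀ (by positivity) (norm_nonneg _)).1 ?_
    rw [mul_pow, Real.sq_sqrt hd.le, hkey]
    have h1 := pow_le_pow_left₀ (norm_nonneg _) (hdecay x) 2
    rw [mul_pow] at h1
    linarith
end
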